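/- Let Δ⁺ₙ = n² − 4 for integers n ≥ 3, and let h(Δ⁺ₙ) denote the order of the (wide) class group of the quadratic order of discriminant Δ⁺ₙ. Then log h(Δ⁺ₙ) = log n + o(log n) as n → ∞; that is, (log h(Δ⁺ₙ) − log n)/log n → 0 as n → ∞. -/

import Mathlib

noncomputable section

/-- A complex square root of an integer `d`. -/
def sqrtD (d : ℤ) : ℂ :=
  if 0 ≤ d then ((Real.sqrt d : ℝ) : ℂ) else Complex.I * ((Real.sqrt (-d) : ℝ) : ℂ)

/-- The element `(Δ + √Δ)/2` generating the quadratic order of discriminant `Δ`. -/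
def omegaD (d : ℤ) : ℂ := ((d : ℂ) + sqrtD d) / 2

/-- The quadratic order `O_Δ = ℤ[(Δ + √Δ)/2]` of discriminant `Δ`, as a subring of `ℂ`. -/
def QOrder (d : ℤ) : Subring ℂ := Subring.closure {omegaD d}

/-- The class number `h_Δ`: the order of the (wide) class group of `O_Δ`,
the group of invertible fractional ideals modulo principal fractional ideals. -/
def classNumber (d : ℤ) : ℕ := Nat.card (ClassGroup (QOrder d))

section
open Complex in
lemma est_aux {a : ℕ → ℂ} (ha0 : ∀ m, 0 ≤ (a m).re ∧ (a m).im = 0) (ha1 : 1 ≤ (a 1).re)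
    {G : ℂ → ℂ} (hG : Differentiable ℂ G)
    (hsum : ∀ s : ℂ, 1 < s.re → LSeriesSummable a s)
    (hGa : ∀ s : ℂ, 1 < s.re → G s = (s - 1) * LSeries a s)
    {B : ℝ} (hB : ∀ s ∈ Metric.sphere (2 : ℂ) (3/2), ‖G s‖ ≤ B) (hB' : ‖G 1‖ ≤ B)
    {l : ℝ} (hl : G 1 = l) {σ g : ℝ} (h78 : 7/8 ≤ σ) (hσ1 : σ < 1) (hg : G σ = g) {M : ℕ} (hM : M ≠ 0) :
    1 ≤ g / (σ - 1) + l * (2 - σ) ^ M / (1 - σ) + 16 * B * (3/4) ^ M := by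
  have hB0 : 0 ≤ B := (norm_nonneg _).trans hB'
  set F : ℂ → ℂ := dslope G 1 with hF
  have hFd : Differentiable ℂ F := by
    have := (differentiableOn_dslope (f := G) (s := Set.univ) (c := 1) Filter.univ_mem).2
      hG.differentiableOn
    exact differentiableOn_univ.1 this
  have hFv : ∀ s : ℂ, s ≠ 1 → F s = (G s - G 1) / (s - 1) := by
    intro s hs
    rw [hF, dslope_of_ne _ hs, slope_def_field]
  have hFb : ∀ s ∈ Metric.sphere (2 : ℂ) (3/2), ‖F s‖ ≤ 4 * B := by
    intro s hs
    have h1 : ‖s - 2‖ = 3/2 := by simpa [dist_eq_norm] using hs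
    have h2 : 1/2 ≤ ‖s - 1‖ := by
      have : ‖(s - 2 : ℂ)‖ ≤ ‖s - 1‖ + ‖(1 : ℂ)‖ := by
        have := norm_sub_le (s - 1) 1
        rwa [show s - 1 - 1 = s - 2 by ring] at this
      simp at this; linarith
    have hs1 : s ≠ 1 := by
      rintro rfl; simp at h2; linarith
    rw [hFv s hs1, norm_div, div_le_iff₀ (by linarith)]
    have := norm_sub_le (G s) (G 1)
    have := hB s hs
    nlinarith [norm_nonneg (G s)]
  have hc : ∀ m, ‖iteratedDeriv m F 2‖ ≤ m.factorial * (4 * B) / (3/2) ^ m := fun m =>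
    norm_iteratedDeriv_le_of_forall_mem_sphere_norm_le m (by norm_num) hFd.diffContOnCl hFb
  -- the coefficients
  have habs : LSeries.abscissaOfAbsConv a < ((2 : ℝ) : EReal) := by
    refine lt_of_le_of_lt (LSeries.abscissaOfAbsConv_le_of_forall_lt_LSeriesSummable (x := 1)
      fun y hy => hsum y (by simpa using hy)) ?_
    exact_mod_cast (by norm_num : (1 : ℝ) < 2)
  have hb : ∀ m, 0 ≤ ((-1) ^ m * iteratedDeriv m (LSeries a) (2 : ℝ)).re := by
    intro m
    have := LSeries.iteratedDeriv_alternating (a := a) (fun k => by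
      rw [Pi.zero_apply]; exact Complex.nonneg_iff.2 ⟨(ha0 k).1, (ha0 k).2.symm⟩) habs m
    exact (Complex.nonneg_iff.1 this).1
  have hrel : ∀ m, iteratedDeriv m (LSeries a) 2 = iteratedDeriv m F 2 + l * ((-1) ^ m * m.factorial) := by
    intro m
    have hopen : IsOpen {s : ℂ | 1 < s.re} := continuous_re.isOpen_preimage _ isOpen_Ioi
    have heq : Set.EqOn (LSeries a) (F + fun s => (l : ℂ) * (fun z => Inv.inv z) (s - 1)) {s : ℂ | 1 < s.re} := by
      intro s hs
      have hs1 : s - 1 ≠ 0 := by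
        intro h; rw [sub_eq_zero] at h; subst h; simp at hs
      simp only [Pi.add_apply]
      rw [hFv s (sub_ne_zero.1 hs1), hGa s hs, hl]
      field_simp
      ring
    have h2 : (2 : ℂ) ∈ {s : ℂ | 1 < s.re} := by simp
    have hcd : ContDiffAt ℂ m (fun s : ℂ => (fun z => Inv.inv z) (s - 1)) 2 := by
      refine ContDiffAt.inv (by fun_prop) (by norm_num)
    rw [heq.iteratedDeriv_of_isOpen hopen m h2, iteratedDeriv_add hFd.contDiff.contDiffAt
      (contDiffAt_const.mul hcd), iteratedDeriv_const_mul _ hcd, iteratedDeriv_comp_sub_const]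
    have := iter_deriv_inv (𝕜 := ℂ) m (2 - 1)
    have h21 : (2 : ℂ) - 1 = 1 := by norm_num
    rw [h21, one_zpow, mul_one] at this
    rw [← iteratedDeriv_eq_iterate] at this
    simp only [h21]
    rw [← this]
  have hL2 : 1 ≤ (LSeries a 2).re := by
    have hs := hsum 2 (by simp)
    have h1 : HasSum (fun n => (LSeries.term a 2 n).re) (LSeries a 2).re :=
      Complex.hasSum_re hs.hasSum
    refine le_trans ?_ (le_hasSum h1 1 ?_)
    · simpa [LSeries.term_def] using ha1
    · intro j _
      have := LSeries.term_nonneg (a := a) (n := j) (Complex.nonneg_iff.2 ⟨(ha0 j).1, (ha0 j).2.symm⟩) 2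
      exact_mod_cast (Complex.nonneg_iff.1 this).1
  -- real coefficients
  set c : ℕ → ℝ := fun m => ((-1) ^ m * iteratedDeriv m F 2).re / m.factorial with hcdef
  have hcl : ∀ m, -l ≤ c m := by
    intro m
    have h := hb m
    push_cast at h
    rw [hrel m, mul_add, add_re] at h
    have e : ((-1 : ℂ) ^ m * (l * ((-1) ^ m * m.factorial))) = ((l * m.factorial : ℝ) : ℂ) := by
      have : ((-1 : ℂ) ^ m) * (-1) ^ m = 1 := by rw [← mul_pow]; simp
      push_cast
      linear_combination (l * m.factorial : ℂ) * this
    rw [e, ofReal_re] at h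
    have hm : (0 : ℝ) < m.factorial := by positivity
    rw [hcdef]; simp only
    rw [le_div_iff₀ hm]
    linarith
  have hc0 : 1 - l ≤ c 0 := by
    have h := hrel 0
    simp only [iteratedDeriv_zero, pow_zero, Nat.factorial_zero, Nat.cast_one, mul_one] at h
    have : c 0 = (F 2).re := by simp [hcdef]
    rw [this]
    have h' := congrArg re h
    simp at h'
    linarith
  have hcabs : ∀ m, |c m| ≤ 4 * B * (2/3) ^ m := by
    intro m
    have hm : (0 : ℝ) < m.factorial := by positivity
    rw [hcdef]; simp only
    rw [abs_div, abs_of_pos hm, div_le_iff₀ hm]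
    refine (abs_re_le_norm _).trans ?_
    rw [norm_mul, norm_pow, norm_neg, norm_one, one_pow, one_mul]
    refine (hc m).trans (le_of_eq ?_)
    rw [show (2/3 : ℝ) = (3/2)⁻¹ by norm_num, inv_pow]
    field_simp
  have hsumF : HasSum (fun m => c m * (2 - σ) ^ m) (F σ).re := by
    have h := Complex.hasSum_re (hasSum_taylorSeries_of_entire hFd 2 σ)
    convert h using 2 with m
    simp only [hcdef, smul_eq_mul]
    have e : ((m.factorial : ℂ)⁻¹ * (((σ : ℂ) - 2) ^ m * iteratedDeriv m F 2))
       = (((2 - σ) ^ m / m.factorial : ℝ) : ℂ) * ((-1) ^ m * iteratedDeriv m F 2) := by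
      have : ((σ : ℂ) - 2) ^ m = (2 - σ) ^ m * (-1) ^ m := by rw [← mul_pow]; ring
      rw [this]; push_cast; ring
    rw [e, re_ofReal_mul]
    ring
  have hFσ : (F σ).re = g / (σ - 1) + l / (1 - σ) := by
    have : (σ : ℂ) ≠ 1 := by
      intro h; have : σ = 1 := by exact_mod_cast h
      linarith
    rw [hFv _ this, hg, hl]
    have e : ((g : ℂ) - l) / (σ - 1) = ((g - l) / (σ - 1) : ℝ) := by push_cast; rfl
    rw [e, ofReal_re]
    have h1 : σ - 1 ≠ 0 := by linarith
    have h2 : 1 - σ ≠ 0 := by linarith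
    have h3 : 1 - σ = -(σ - 1) := by ring
    rw [h3]; field_simp; ring
  -- split
  have hx0 : 0 ≤ 2 - σ := by linarith
  have hhead : 1 - l * ∑ m ∈ Finset.range M, (2 - σ) ^ m - (if M = 0 then 1 else 0) ≤
      ∑ m ∈ Finset.range M, c m * (2 - σ) ^ m := by
    rcases M with _ | M
    · simp
    · simp only [Nat.add_eq_zero_iff, one_ne_zero, and_false, if_false, sub_zero]
      rw [Finset.sum_range_succ', Finset.sum_range_succ', mul_add, Finset.mul_sum]
      have : ∑ i ∈ Finset.range M, -(l * (2 - σ) ^ (i + 1)) ≤ ∑ i ∈ Finset.range M, c (i+1) * (2 - σ) ^ (i + 1) := by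
        refine Finset.sum_le_sum fun i _ => ?_
        have := mul_le_mul_of_nonneg_right (hcl (i+1)) (pow_nonneg hx0 (i+1))
        linarith
      rw [Finset.sum_neg_distrib] at this
      simp only [pow_zero, mul_one]
      linarith
  have htail : -(16 * B * (3/4) ^ M) ≤ ∑' m, c (m + M) * (2 - σ) ^ (m + M) := by
    have hg : HasSum (fun m : ℕ => 4 * B * (3/4 : ℝ) ^ M * (3/4) ^ m) (16 * B * (3/4) ^ M) := by
      have := (hasSum_geometric_of_lt_one (r := (3/4 : ℝ)) (by norm_num) (by norm_num)).mul_left (4 * B * (3/4 : ℝ) ^ M)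
      have e : 4 * B * (3/4 : ℝ) ^ M * (1 - 3/4)⁻¹ = 16 * B * (3/4) ^ M := by norm_num; ring
      rwa [e] at this
    have hbd : ∀ m, |c (m + M) * (2 - σ) ^ (m + M)| ≤ 4 * B * (3/4 : ℝ) ^ M * (3/4) ^ m := by
      intro m
      rw [abs_mul, abs_of_nonneg (pow_nonneg hx0 _)]
      have h98 : (2 - σ) ^ (m + M) ≤ (9/8) ^ (m + M) := pow_le_pow_left₀ hx0 (by linarith) _
      calc _ ≤ (4 * B * (2/3) ^ (m+M)) * (9/8) ^ (m+M) :=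
            mul_le_mul (hcabs _) h98 (pow_nonneg hx0 _) (by positivity)
        _ = _ := by
            rw [mul_assoc, ← mul_pow, mul_assoc (4*B), ← pow_add, add_comm m M]; norm_num
    have h1 := tsum_of_norm_bounded hg (f := fun m => c (m + M) * (2 - σ) ^ (m + M)) (by simpa using hbd)
    rw [Real.norm_eq_abs] at h1
    exact (abs_le.1 h1).1
  have hsplit := hsumF.summable.sum_add_tsum_nat_add M
  rw [hsumF.tsum_eq, hFσ] at hsplit
  have hgeom : ∑ m ∈ Finset.range M, (2 - σ) ^ m = ((2 - σ) ^ M - 1) / (1 - σ) := by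
    rw [geom_sum_eq (by linarith), show 2 - σ - 1 = 1 - σ by ring]
  rw [hgeom] at hhead
  rw [if_neg hM] at hhead
  have e : l * (((2 - σ) ^ M - 1) / (1 - σ)) = l * (2 - σ) ^ M / (1 - σ) - l / (1 - σ) := by
    ring
  rw [e] at hhead
  linarith

open Complex in
lemma est_main {a : ℕ → ℂ} (ha0 : ∀ m, 0 ≤ (a m).re ∧ (a m).im = 0) (ha1 : 1 ≤ (a 1).re)
    {G : ℂ → ℂ} (hG : Differentiable ℂ G)
    (hsum : ∀ s : ℂ, 1 < s.re → LSeriesSummable a s)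
    (hGa : ∀ s : ℂ, 1 < s.re → G s = (s - 1) * LSeries a s)
    {B : ℝ} (hB1 : 1 ≤ B) (hB : ∀ s ∈ Metric.sphere (2 : ℂ) (3/2), ‖G s‖ ≤ B) (hB' : ‖G 1‖ ≤ B)
    {l : ℝ} (hl0 : 0 ≤ l) (hl : G 1 = l) {σ g : ℝ} (h78 : 7/8 ≤ σ) (hσ1 : σ < 1) (hg : G σ = g) :
    1 / 2 ≤ g / (σ - 1) + 3 * l / (1 - σ) * (32 * B) ^ (4 * (1 - σ)) := by
  set y := Real.log (32 * B) / Real.log (4/3) with hy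
  have hlog43 : 1/4 ≤ Real.log (4/3) := by
    have := Real.one_sub_inv_le_log_of_pos (x := 4/3) (by norm_num)
    norm_num at this ⊢; linarith
  have hlogB : 0 < Real.log (32 * B) := Real.log_pos (by linarith)
  have hypos : 0 < y := div_pos hlogB (by linarith)
  have hM0 : ⌈y⌉₊ ≠ 0 := (Nat.ceil_pos.2 hypos).ne'
  have h := est_aux ha0 ha1 hG hsum hGa hB hB' hl h78 hσ1 hg hM0
  have h1 : 16 * B * (3/4) ^ ⌈y⌉₊ ≤ 1/2 := by
    have hc : y ≤ ⌈y⌉₊ := Nat.le_ceil y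
    have h2 : Real.log (32 * B) ≤ ⌈y⌉₊ * Real.log (4/3) := by
      rwa [hy, div_le_iff₀ (by linarith)] at hc
    rw [← Real.log_pow, Real.log_le_log_iff (by linarith) (by positivity)] at h2
    have h3 : (3/4 : ℝ) ^ ⌈y⌉₊ * (4/3) ^ ⌈y⌉₊ = 1 := by rw [← mul_pow]; norm_num
    have h4 : (0 : ℝ) ≤ (3/4 : ℝ) ^ ⌈y⌉₊ := by positivity
    nlinarith [mul_le_mul_of_nonneg_left h2 h4]
  have h2 : (2 - σ) ^ ⌈y⌉₊ ≤ 3 * (32 * B) ^ (4 * (1 - σ)) := by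
    have hy4 : y ≤ 4 * Real.log (32 * B) := by
      rw [hy, div_le_iff₀ (by linarith)]
      nlinarith
    have hc : (⌈y⌉₊ : ℝ) ≤ 4 * Real.log (32 * B) + 1 := by
      have := (Nat.ceil_lt_add_one hypos.le).le
      linarith
    have he : (2 - σ) ≤ Real.exp (1 - σ) := by
      have := Real.add_one_le_exp (1 - σ); linarith
    calc (2 - σ) ^ ⌈y⌉₊ ≤ (Real.exp (1 - σ)) ^ ⌈y⌉₊ := pow_le_pow_left₀ (by linarith) he _
      _ = Real.exp (⌈y⌉₊ * (1 - σ)) := by rw [← Real.exp_nat_mul]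
      _ ≤ Real.exp (1 + Real.log (32 * B) * (4 * (1 - σ))) := by
          apply Real.exp_le_exp.2
          nlinarith
      _ = Real.exp 1 * (32 * B) ^ (4 * (1 - σ)) := by
          rw [Real.exp_add, Real.rpow_def_of_pos (by linarith)]
      _ ≤ _ := by
          gcongr
          exact Real.exp_one_lt_three.le
  have h3 : l * (2 - σ) ^ ⌈y⌉₊ / (1 - σ) ≤ 3 * l / (1 - σ) * (32 * B) ^ (4 * (1 - σ)) := by
    have : l * (2 - σ) ^ ⌈y⌉₊ / (1 - σ) ≤ l * (3 * (32 * B) ^ (4 * (1 - σ))) / (1 - σ) := by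
      have : 0 < 1 - σ := by linarith
      gcongr
    refine this.trans (le_of_eq ?_)
    ring
  linarith

end

section
open MeasureTheory Set

set_option linter.unusedSectionVars false

namespace LB
variable {N : ℕ} [NeZero N]

lemma sum_zmod {N : ℕ} [NeZero N] (F : ZMod N → ℂ) :
    ∑ k ∈ Finset.range N, F (k : ZMod N) = ∑ x : ZMod N, F x := by
  obtain ⟨m, rfl⟩ : ∃ m, N = m + 1 := ⟨N - 1, by have := NeZero.pos N; omega⟩
  rw [Finset.sum_range]
  refine Finset.sum_congr rfl fun x _ => ?_
  congr 1
  exact Fin.cast_val_eq_self x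

lemma T_periodic (χ : DirichletCharacter ℂ N) (hχ : χ ≠ 1) :
    Function.Periodic (fun n : ℕ => ∑ k ∈ Finset.range n, χ (k : ZMod N)) N := by
  intro n
  simp only
  rw [Finset.sum_range_add]
  have : ∑ x ∈ Finset.range N, χ ((n + x : ℕ) : ZMod N) = 0 := by
    have h := sum_zmod (fun x : ZMod N => χ (n + x))
    push_cast
    rw [h, ← MulChar.sum_eq_zero_of_ne_one hχ]
    exact Fintype.sum_equiv (Equiv.addLeft (n : ZMod N)) _ _ (fun x => rfl)
  rw [this, add_zero]

lemma norm_sum_le (χ : DirichletCharacter ℂ N) (hχ : χ ≠ 1) (n : ℕ) :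
    ‖∑ k ∈ Finset.Icc 1 n, χ (k : ZMod N)‖ ≤ N := by
  have h0 : χ (0 : ZMod N) = 0 := by
    apply χ.map_nonunit
    rw [isUnit_zero_iff]
    intro h
    have : Subsingleton (ZMod N) := subsingleton_of_zero_eq_one h
    have : N = 1 := by
      have := ZMod.subsingleton_iff.1 this
      exact this
    subst this
    exact hχ (DirichletCharacter.level_one χ)
  have h1 : ∑ k ∈ Finset.Icc 1 n, χ (k : ZMod N) = ∑ k ∈ Finset.range (n+1), χ (k : ZMod N) := by
    rw [Finset.range_eq_Ico, Finset.sum_eq_sum_Ico_succ_bot (by omega)]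
    simp only [Nat.cast_zero, h0, zero_add]
    rfl
  rw [h1]
  have h2 := (T_periodic χ hχ).map_mod_nat (n+1)
  rw [← h2]
  refine (_root_.norm_sum_le _ _).trans ?_
  refine (Finset.sum_le_sum (fun k _ => χ.norm_le_one _)).trans ?_
  simp only [Finset.sum_const, Finset.card_range, nsmul_eq_mul, mul_one, Nat.cast_le]
  exact (Nat.mod_lt _ (NeZero.pos N)).le

/-- the summatory function -/
noncomputable def S (χ : DirichletCharacter ℂ N) (t : ℝ) : ℂ := ∑ k ∈ Finset.Icc 1 ⌊t⌋₊, χ (k : ZMod N)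

lemma norm_S_le (χ : DirichletCharacter ℂ N) (hχ : χ ≠ 1) (t : ℝ) : ‖S χ t‖ ≤ N :=
  norm_sum_le χ hχ _

lemma norm_S_le' (χ : DirichletCharacter ℂ N) {t : ℝ} (ht : 0 ≤ t) : ‖S χ t‖ ≤ t := by
  refine (_root_.norm_sum_le _ _).trans ?_
  refine (Finset.sum_le_sum (fun k _ => χ.norm_le_one _)).trans ?_
  simp
  exact Nat.floor_le ht

lemma measurable_S (χ : DirichletCharacter ℂ N) : Measurable (S χ) :=
  (measurable_from_nat (f := fun n : ℕ => ∑ k ∈ Finset.Icc 1 n, χ (k : ZMod N))).comp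
    Nat.measurable_floor

lemma LFunction_eq (χ : DirichletCharacter ℂ N) (hχ : χ ≠ 1) {s : ℂ} (hs : 0 < s.re) :
    DirichletCharacter.LFunction χ s = s * ∫ t in Ioi (1 : ℝ), S χ t * (t : ℂ) ^ (-(s + 1)) := by
  set f : ℝ → ℂ := (Ioi (1 : ℝ)).indicator (S χ) with hf
  have hmel : ∀ s : ℂ, mellin f (-s) = ∫ t in Ioi (1 : ℝ), S χ t * (t : ℂ) ^ (-(s + 1)) := by
    intro s
    rw [mellin]
    have : ∀ t : ℝ, (t : ℂ) ^ (-s - 1) • f t = (Ioi (1 : ℝ)).indicator (fun t => S χ t * (t : ℂ) ^ (-(s + 1))) t := by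
      intro t
      rw [hf]
      by_cases ht : t ∈ Ioi (1 : ℝ)
      · rw [indicator_of_mem ht, indicator_of_mem ht, smul_eq_mul, mul_comm]
        congr 2; ring
      · rw [indicator_of_notMem ht, indicator_of_notMem ht, smul_zero]
    simp_rw [this]
    rw [setIntegral_indicator measurableSet_Ioi]
    congr 2
    ext x; simp
  have hmeas : Measurable f := (measurable_S χ).indicator measurableSet_Ioi
  have hfb : ∀ t, ‖f t‖ ≤ N := by
    intro t
    rw [hf]
    by_cases ht : t ∈ Ioi (1 : ℝ)
    · rw [indicator_of_mem ht]; exact norm_S_le χ hχ t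
    · rw [indicator_of_notMem ht]; simp
  have hdiff : ∀ s : ℂ, 0 < s.re → DifferentiableAt ℂ (fun s => s * mellin f (-s)) s := by
    intro s hs
    have h1 : DifferentiableAt ℂ (mellin f) (-s) := by
      refine mellin_differentiableAt_of_isBigO_rpow (a := 0) (b := -s.re - 1) ?_ ?_ (by simpa using hs) ?_ (by simp)
      · apply LocallyIntegrable.locallyIntegrableOn
        have hc : LocallyIntegrable (fun _ : ℝ => (N : ℝ)) := locallyIntegrable_const _
        refine hc.mono hmeas.aestronglyMeasurable (Filter.Eventually.of_forall fun t => ?_)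
        simpa using hfb t
      · refine Asymptotics.IsBigO.of_bound N (Filter.Eventually.of_forall fun t => ?_)
        simpa using hfb t
      · refine Asymptotics.IsBigO.of_bound 0 ?_
        have : Ioo (0:ℝ) 1 ∈ nhdsWithin (0:ℝ) (Ioi 0) := Ioo_mem_nhdsGT one_pos
        filter_upwards [this] with t ht
        rw [hf, indicator_of_notMem (by simp; exact ht.2.le)]
        simp
    have h2 : DifferentiableAt ℂ (mellin f ∘ fun s : ℂ => -s) s :=
      DifferentiableAt.comp (f := fun s : ℂ => -s) s h1 differentiableAt_id.neg
    exact differentiableAt_id.mul h2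
  have hopen : IsOpen {s : ℂ | 0 < s.re} := Complex.continuous_re.isOpen_preimage _ isOpen_Ioi
  have hconv : IsPreconnected {s : ℂ | 0 < s.re} := (convex_halfSpace_re_gt 0).isPreconnected
  have hA1 : AnalyticOnNhd ℂ (fun s => s * mellin f (-s)) {s : ℂ | 0 < s.re} :=
    DifferentiableOn.analyticOnNhd (fun s hs => (hdiff s hs).differentiableWithinAt) hopen
  have hA2 : AnalyticOnNhd ℂ (DirichletCharacter.LFunction χ) {s : ℂ | 0 < s.re} :=
    DifferentiableOn.analyticOnNhd (DirichletCharacter.differentiable_LFunction hχ).differentiableOn hopen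
  have hev : DirichletCharacter.LFunction χ =ᶠ[nhds (2 : ℂ)] (fun s => s * mellin f (-s)) := by
    have : {s : ℂ | 1 < s.re} ∈ nhds (2 : ℂ) :=
      (Complex.continuous_re.isOpen_preimage _ isOpen_Ioi).mem_nhds (by simp)
    filter_upwards [this] with s hs
    have hs' : 1 < s.re := hs
    rw [DirichletCharacter.LFunction_eq_LSeries χ hs', hmel,
      LSeries_eq_mul_integral (fun n : ℕ => χ (n : ZMod N)) (r := 0) le_rfl (by linarith)
        (DirichletCharacter.LSeriesSummable_of_one_lt_re χ hs')]
    · rfl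
    · refine Asymptotics.IsBigO.of_bound N (Filter.Eventually.of_forall fun t => ?_)
      simpa using norm_sum_le χ hχ t
  have := hA2.eqOn_of_preconnected_of_eventuallyEq hA1 hconv (z₀ := 2) (by simp) hev hs
  rw [this]
  simp only [hmel]

lemma norm_LFunction_le (χ : DirichletCharacter ℂ N) (hχ : χ ≠ 1) {s : ℂ} (hs : 0 < s.re) :
    ‖DirichletCharacter.LFunction χ s‖ ≤ ‖s‖ * N / s.re := by
  rw [LFunction_eq χ hχ hs, norm_mul, mul_div_assoc]
  gcongr
  have hint : IntegrableOn (fun t : ℝ => (N : ℝ) * t ^ (-(s.re + 1))) (Ioi 1) :=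
    (integrableOn_Ioi_rpow_of_lt (by linarith) one_pos).const_mul _
  refine (norm_integral_le_of_norm_le hint ?_).trans (le_of_eq ?_)
  · filter_upwards [ae_restrict_mem measurableSet_Ioi] with t ht
    have ht0 : (0:ℝ) < t := one_pos.trans ht
    rw [norm_mul, Complex.norm_cpow_eq_rpow_re_of_pos ht0]
    simp only [Complex.neg_re, Complex.add_re, Complex.one_re]
    gcongr
    exact norm_S_le χ hχ t
  · rw [integral_const_mul, integral_Ioi_rpow_of_lt (by linarith) one_pos]
    simp
    field_simp

lemma norm_LFunction_one_le (χ : DirichletCharacter ℂ N) (hχ : χ ≠ 1) :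
    ‖DirichletCharacter.LFunction χ 1‖ ≤ Real.log N + 1 := by
  rw [LFunction_eq χ hχ (by simp), one_mul]
  have hN1 : (1 : ℝ) ≤ N := by exact_mod_cast NeZero.pos N
  have hN0 : (0 : ℝ) < N := by linarith
  set F : ℝ → ℂ := fun t => S χ t * (t : ℂ) ^ (-((1:ℂ) + 1)) with hF
  have hFm : Measurable F := by
    refine (measurable_S χ).mul ?_
    exact (Complex.measurable_ofReal).pow_const _
  have hnorm : ∀ t : ℝ, 0 < t → ‖F t‖ = ‖S χ t‖ * t ^ (-2 : ℝ) := by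
    intro t ht
    rw [hF]; simp only
    rw [norm_mul, Complex.norm_cpow_eq_rpow_re_of_pos ht]
    norm_num
  have hb1 : ∀ t ∈ Ioi (1:ℝ), ‖F t‖ ≤ N * t ^ (-2 : ℝ) := by
    intro t ht
    have ht0 : (0:ℝ) < t := one_pos.trans ht
    rw [hnorm t ht0]
    gcongr
    exact norm_S_le χ hχ t
  have hb2 : ∀ t ∈ Ioi (1:ℝ), ‖F t‖ ≤ t⁻¹ := by
    intro t ht
    have ht0 : (0:ℝ) < t := one_pos.trans ht
    rw [hnorm t ht0]
    have h := mul_le_mul_of_nonneg_right (norm_S_le' χ ht0.le) (Real.rpow_nonneg ht0.le (-2))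
    refine h.trans (le_of_eq ?_)
    rw [Real.rpow_neg ht0.le, Real.rpow_two]
    field_simp
  have hintN : IntegrableOn (fun t : ℝ => (N : ℝ) * t ^ (-2 : ℝ)) (Ioi 1) :=
    (integrableOn_Ioi_rpow_of_lt (by norm_num) one_pos).const_mul _
  have hFi : IntegrableOn F (Ioi 1) := by
    refine Integrable.mono' hintN hFm.aestronglyMeasurable ?_
    filter_upwards [ae_restrict_mem measurableSet_Ioi] with t ht using hb1 t ht
  have hsplit : Ioi (1:ℝ) = Ioc 1 (N:ℝ) ∪ Ioi (N:ℝ) := (Ioc_union_Ioi_eq_Ioi hN1).symm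
  have hsub1 : Ioc 1 (N:ℝ) ⊆ Ioi 1 := Ioc_subset_Ioi_self
  have hsub2 : Ioi (N:ℝ) ⊆ Ioi 1 := Ioi_subset_Ioi hN1
  rw [hsplit, setIntegral_union Ioc_disjoint_Ioi_same measurableSet_Ioi (hFi.mono_set hsub1) (hFi.mono_set hsub2)]
  refine (norm_add_le _ _).trans (add_le_add ?_ ?_)
  · have hi : IntegrableOn (fun t : ℝ => t⁻¹) (Ioc 1 (N:ℝ)) := by
      rw [← intervalIntegrable_iff_integrableOn_Ioc_of_le hN1]
      refine intervalIntegral.intervalIntegrable_inv (fun x hx => ?_) continuousOn_id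
      rw [uIcc_of_le hN1] at hx
      have := hx.1
      simp; linarith
    refine (norm_integral_le_of_norm_le hi ?_).trans (le_of_eq ?_)
    · filter_upwards [ae_restrict_mem measurableSet_Ioc] with t ht using hb2 t (hsub1 ht)
    · rw [← intervalIntegral.integral_of_le hN1, integral_inv_of_pos one_pos hN0, div_one]
  · refine (norm_integral_le_of_norm_le (hintN.mono_set hsub2) ?_).trans (le_of_eq ?_)
    · filter_upwards [ae_restrict_mem measurableSet_Ioi] with t ht using hb1 t (hsub2 ht)
    · rw [integral_const_mul, integral_Ioi_rpow_of_lt (by norm_num) hN0]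
      norm_num
      rw [Real.rpow_neg hN0.le, Real.rpow_one]
      field_simp

lemma LFunction_real (χ : DirichletCharacter ℂ N) (hχ : χ ≠ 1) (hr : ∀ x, (χ x).im = 0) {σ : ℝ} (hs : 0 < σ) :
    (DirichletCharacter.LFunction χ σ).im = 0 := by
  rw [LFunction_eq χ hχ (by simpa using hs)]
  have : ∫ t in Ioi (1 : ℝ), S χ t * (t : ℂ) ^ (-((σ:ℂ) + 1)) =
      ((∫ t in Ioi (1 : ℝ), (S χ t).re * t ^ (-(σ + 1)) : ℝ) : ℂ) := by
    rw [← integral_complex_ofReal]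
    refine setIntegral_congr_fun measurableSet_Ioi fun t ht => ?_
    have ht0 : (0:ℝ) < t := one_pos.trans ht
    have h1 : S χ t = ((S χ t).re : ℂ) := by
      apply Complex.ext
      · simp
      · simp [S, Complex.im_sum, hr]
    have h2 : (t : ℂ) ^ (-((σ:ℂ) + 1)) = ((t ^ (-(σ + 1)) : ℝ) : ℂ) := by
      rw [Complex.ofReal_cpow ht0.le]; push_cast; rfl
    rw [h2]
    conv_lhs => rw [h1]
    push_cast; rfl
  rw [this, ← Complex.ofReal_mul, Complex.ofReal_im]

end LB

end

section
/-- Kronecker-type symbol, vanishing on even numbers -/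
def kr (D : ℕ) (m : ℕ) : ℤ := if Odd m then jacobiSym (D : ℤ) m else 0

namespace KR

lemma zero (D : ℕ) : kr D 0 = 0 := by simp [kr]
lemma one (D : ℕ) : kr D 1 = 1 := by simp [kr]
lemma tri (D m : ℕ) : kr D m = 0 ∨ kr D m = 1 ∨ kr D m = -1 := by
  unfold kr; split_ifs
  · exact jacobiSym.trichotomy _ _
  · exact Or.inl rfl
lemma mul_left (D E m : ℕ) : kr (D * E) m = kr D m * kr E m := by
  unfold kr; split_ifs
  · push_cast; exact jacobiSym.mul_left _ _ _
  · simp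
lemma mul_right (D m k : ℕ) : kr D (m * k) = kr D m * kr D k := by
  unfold kr
  by_cases hm : Odd m
  · by_cases hk : Odd k
    · rw [if_pos hm, if_pos hk, if_pos (hm.mul hk)]
      have : NeZero m := ⟨by rintro rfl; simp at hm⟩
      have : NeZero k := ⟨by rintro rfl; simp at hk⟩
      exact jacobiSym.mul_right _ _ _
    · rw [if_neg hk, if_neg (fun h => hk (Nat.odd_mul.1 h).2), mul_zero]
  · rw [if_neg hm, if_neg (fun h => hm (Nat.odd_mul.1 h).1), zero_mul]
lemma pow_right (D m k : ℕ) : kr D (m ^ k) = kr D m ^ k := by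
  induction k with
  | zero => simp [one]
  | succ k ih => rw [pow_succ, mul_right, ih, pow_succ]
lemma mod (D m : ℕ) : kr D (m % (4 * D)) = kr D m := by
  unfold kr
  have h : Odd (m % (4 * D)) ↔ Odd m := by
    rw [Nat.odd_iff, Nat.odd_iff, Nat.mod_mod_of_dvd _ ⟨2 * D, by ring⟩]
  by_cases hm : Odd m
  · rw [if_pos hm, if_pos (h.2 hm), jacobiSym.mod_right (D : ℤ) hm]; simp
  · rw [if_neg hm, if_neg (fun h' => hm (h.1 h'))]
lemma eq_zero_of_not_coprime {D m : ℕ} (h : ¬ m.Coprime (4 * D)) : kr D m = 0 := by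
  unfold kr
  split_ifs with hm
  · have : NeZero m := ⟨by rintro rfl; simp at hm⟩
    rw [jacobiSym.eq_zero_iff_not_coprime]
    intro h'
    apply h
    have h4 : m.Coprime 4 := by
      rw [show 4 = 2 ^ 2 by norm_num]
      exact Nat.Coprime.pow_right 2 (Nat.coprime_two_right.2 hm)
    refine Nat.Coprime.mul_right h4 ?_
    rw [Int.gcd_natCast_natCast] at h'
    exact Nat.coprime_comm.1 h'
  · rfl
lemma ne_zero_of_coprime {D m : ℕ} (h : m.Coprime (4 * D)) : kr D m ≠ 0 := by
  unfold kr
  have hm : Odd m := by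
    rw [← Nat.coprime_two_right]; exact Nat.Coprime.coprime_dvd_right ⟨2 * D, by ring⟩ h
  rw [if_pos hm]
  have : NeZero m := ⟨by rintro rfl; simp at hm⟩
  rw [Ne, jacobiSym.eq_zero_iff_not_coprime, not_not, Int.gcd_natCast_natCast]
  exact Nat.coprime_comm.1 (Nat.Coprime.coprime_dvd_right ⟨4, by ring⟩ h)

/-- the Dirichlet character `kr D` -/
noncomputable def chi (D : ℕ) [NeZero D] : DirichletCharacter ℂ (4 * D) where
  toFun x := (kr D x.val : ℂ)
  map_one' := by
    have : Fact (1 < 4 * D) := ⟨by have := NeZero.pos D; omega⟩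
    rw [ZMod.val_one]; simp [one]
  map_mul' x y := by
    rw [ZMod.val_mul, mod, mul_right]; push_cast; rfl
  map_nonunit' x hx := by
    have : kr D x.val = 0 := by
      apply eq_zero_of_not_coprime
      intro h
      apply hx
      have := (ZMod.isUnit_iff_coprime x.val (4 * D)).2 h
      rwa [ZMod.natCast_zmod_val] at this
    simp [this]

lemma chi_apply (D : ℕ) [NeZero D] (m : ℕ) : chi D (m : ZMod (4 * D)) = (kr D m : ℂ) := by
  change ((kr D (m : ZMod (4 * D)).val : ℤ) : ℂ) = _
  rw [ZMod.val_natCast, mod]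

lemma chi_im (D : ℕ) [NeZero D] (x) : (chi D x).im = 0 := by
  change (((kr D x.val : ℤ) : ℂ)).im = 0
  simp

lemma exists_neg_one {D : ℕ} (hD : ¬ IsSquare D) : ∃ m, kr D m = -1 := by
  have hD0 : D ≠ 0 := by rintro rfl; exact hD ⟨0, rfl⟩
  obtain ⟨a, b, hab, hsq⟩ := Nat.sq_mul_squarefree D
  have ha1 : a ≠ 1 := by
    rintro rfl; exact hD ⟨b, by rw [← hab]; ring⟩
  have hb0 : b ≠ 0 := by rintro rfl; simp at hab; exact hD0 hab.symm
  obtain ⟨p, hp, hpa⟩ := Nat.exists_prime_and_dvd ha1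
  obtain ⟨a', rfl⟩ := hpa
  have hpa' : ¬ p ∣ a' := by
    rintro ⟨c, rfl⟩
    have := hsq p ⟨c, by ring⟩
    exact hp.one_lt.ne' (Nat.isUnit_iff.1 this)
  obtain ⟨j, b', hpb, rfl⟩ := Nat.exists_eq_pow_mul_and_not_dvd hb0 p hp.ne_one
  set w := b' ^ 2 * a' with hw
  have hpw : ¬ p ∣ w := by
    intro h
    rcases (Nat.Prime.dvd_mul hp).1 h with h | h
    · exact hpb (hp.dvd_of_dvd_pow h)
    · exact hpa' h
  have hDw : D = p ^ (2 * j + 1) * w := by rw [← hab, hw]; ring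
  have key : ∀ m, kr p m = -1 → kr w m = 1 → kr D m = -1 := by
    intro m h1 h2
    have : ∀ k, kr (p ^ k) m = kr 1 m * kr p m ^ k := by
      intro k
      induction k with
      | zero => simp
      | succ k ih => rw [pow_succ, mul_left, ih]; ring
    have h1' : kr 1 m = 1 := by
      unfold kr at h1 ⊢
      split_ifs at h1 ⊢
      · simp
    rw [hDw, mul_left, h2, this, h1, h1']
    simp [pow_succ, pow_mul]
  rcases hp.eq_two_or_odd' with rfl | hpo
  · have hwo : Odd w := by rw [← Nat.not_even_iff_odd, even_iff_two_dvd]; exact hpw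
    have hco : Nat.Coprime 8 w := by
      rw [show 8 = 2 ^ 3 by norm_num]
      exact Nat.Coprime.pow_left 3 (Nat.coprime_two_left.2 hwo)
    obtain ⟨m, hm1, hm2⟩ := Nat.chineseRemainder hco 5 1
    have hm8 : m % 8 = 5 := hm1
    have hmo : Odd m := by rw [Nat.odd_iff]; omega
    refine ⟨m, key m ?_ ?_⟩
    · unfold kr; rw [if_pos hmo]
      have : ((2 : ℕ) : ℤ) = 2 := rfl
      rw [this, jacobiSym.at_two hmo]
      rw [ZMod.χ₈_nat_mod_eight, hm8]; decide
    · unfold kr; rw [if_pos hmo, ← jacobiSym.quadratic_reciprocity_one_mod_four (by omega) hwo]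
      rw [jacobiSym.mod_left]
      have : ((m : ℤ) % (w : ℤ)) = (1 : ℤ) % w := by exact_mod_cast hm2
      rw [this, ← jacobiSym.mod_left]; simp
  · have : Fact p.Prime := ⟨hp⟩
    obtain ⟨g, hg⟩ := FiniteField.exists_nonsquare (F := ZMod p) (by
      rw [ZMod.ringChar_zmod_n]; rintro rfl; exact absurd hpo (by decide))
    have hco : Nat.Coprime (4 * w) p := by
      rw [Nat.coprime_comm, hp.coprime_iff_not_dvd, hp.dvd_mul, not_or]
      refine ⟨fun h => ?_, hpw⟩
      have : p ∣ 2 := hp.dvd_of_dvd_pow (n := 2) (by simpa using h)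
      have := (Nat.prime_dvd_prime_iff_eq hp Nat.prime_two).1 this
      subst this; exact absurd hpo (by decide)
    obtain ⟨m, hm1, hm2⟩ := Nat.chineseRemainder hco 1 g.val
    have hm4 : m % 4 = 1 := by
      have : m ≡ 1 [MOD 4] := Nat.ModEq.of_mul_right w hm1
      exact this
    have hmo : Odd m := by rw [Nat.odd_iff]; omega
    refine ⟨m, key m ?_ ?_⟩
    · unfold kr; rw [if_pos hmo, ← jacobiSym.quadratic_reciprocity_one_mod_four hm4 hpo,
        ← jacobiSym.legendreSym.to_jacobiSym, legendreSym.eq_neg_one_iff]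
      have : ((m : ℤ) : ZMod p) = g := by
        have := (ZMod.natCast_eq_natCast_iff _ _ _).2 hm2
        simpa using this
      rw [this]; exact hg
    · rw [← mod, show m % (4 * w) = 1 % (4 * w) from hm1, mod, one]

lemma chi_ne_one {D : ℕ} [NeZero D] (hD : ¬ IsSquare D) : chi D ≠ 1 := by
  intro h
  obtain ⟨m, hm⟩ := exists_neg_one hD
  have h1 := chi_apply D m
  rw [hm, h, MulChar.one_apply] at h1
  · norm_num at h1
  · rw [ZMod.isUnit_iff_coprime]
    by_contra hc
    rw [eq_zero_of_not_coprime hc] at hm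
    norm_num at hm

open ArithmeticFunction
open scoped ArithmeticFunction.zeta

/-- arithmetic function of `kr` -/
def A (D : ℕ) : ArithmeticFunction ℤ := ⟨kr D, zero D⟩

lemma A_apply (D m) : A D m = kr D m := rfl

lemma A_mult (D : ℕ) : (A D).IsMultiplicative :=
  ⟨one D, fun _ => mul_right D _ _⟩

lemma mul_prime_pow (f g : ArithmeticFunction ℤ) {p : ℕ} (hp : p.Prime) (k : ℕ) :
    (f * g) (p ^ k) = ∑ i ∈ Finset.range (k + 1), f (p ^ i) * g (p ^ (k - i)) := by
  rw [mul_apply, Nat.sum_divisorsAntidiagonal (f := fun i j => f i * g j), Nat.divisors_prime_pow hp]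
  simp only [Finset.sum_map, Function.Embedding.coeFn_mk]
  refine Finset.sum_congr rfl fun i hi => ?_
  rw [Nat.pow_div (by simpa [Nat.lt_succ_iff] using hi) hp.pos]

lemma nonneg_of_prime_pow {f : ArithmeticFunction ℤ} (hf : f.IsMultiplicative)
    (h : ∀ p k, p.Prime → 0 ≤ f (p ^ k)) (m : ℕ) : 0 ≤ f m := by
  rcases eq_or_ne m 0 with rfl | hm
  · simp
  · rw [hf.multiplicative_factorization f hm]
    exact Finset.prod_nonneg fun p hp => h p _ (Nat.prime_of_mem_primeFactors hp)

lemma mul_nonneg_prime_pow {f g : ArithmeticFunction ℤ} {p : ℕ} (hp : p.Prime) 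
    (hf : ∀ k, 0 ≤ f (p ^ k)) (hg : ∀ k, 0 ≤ g (p ^ k)) (k : ℕ) : 0 ≤ (f * g) (p ^ k) := by
  rw [mul_prime_pow f g hp]
  exact Finset.sum_nonneg fun i _ => mul_nonneg (hf _) (hg _)

lemma zA_prime_pow (D : ℕ) {p : ℕ} (hp : p.Prime) (k : ℕ) :
    ((ζ : ArithmeticFunction ℤ) * A D) (p ^ k) = ∑ i ∈ Finset.range (k + 1), kr D p ^ i := by
  rw [mul_prime_pow _ _ hp, ← Finset.sum_range_reflect]
  refine Finset.sum_congr rfl fun i hi => ?_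
  have hi' : i ≤ k := by simpa [Nat.lt_succ_iff] using hi
  have : (ζ : ArithmeticFunction ℤ) (p ^ (k + 1 - 1 - i)) = 1 := by
    rw [natCoe_apply, zeta_apply_ne (pow_ne_zero _ hp.ne_zero)]; rfl
  rw [this, A_apply, pow_right, one_mul]
  congr 1; omega

lemma geom_nonneg {x : ℤ} (hx : x = 0 ∨ x = 1 ∨ x = -1) (k : ℕ) : 0 ≤ ∑ i ∈ Finset.range (k + 1), x ^ i := by
  rcases hx with rfl | rfl | rfl
  · exact Finset.sum_nonneg fun i _ => by positivity
  · simp; positivity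
  · rw [neg_one_geom_sum]; split_ifs <;> norm_num

lemma zA_nonneg (D m : ℕ) : 0 ≤ ((ζ : ArithmeticFunction ℤ) * A D) m := by
  refine nonneg_of_prime_pow ((isMultiplicative_zeta.natCast).mul (A_mult D)) (fun p k hp => ?_) m
  rw [zA_prime_pow D hp]
  exact geom_nonneg (tri D p) k

lemma AA_prime_pow (D E : ℕ) {p : ℕ} (hp : p.Prime) (k : ℕ) :
    (A E * A (D * E)) (p ^ k) = kr E p ^ k * ∑ i ∈ Finset.range (k + 1), kr D p ^ i := by
  rw [mul_prime_pow _ _ hp, Finset.mul_sum, ← Finset.sum_range_reflect]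
  refine Finset.sum_congr rfl fun i hi => ?_
  have hi' : i ≤ k := by simpa [Nat.lt_succ_iff] using hi
  rw [A_apply, A_apply, pow_right, pow_right, mul_left, mul_pow,
    show k - (k + 1 - 1 - i) = i by omega, show k + 1 - 1 - i = k - i by omega]
  have : kr E p ^ k = kr E p ^ (k - i) * kr E p ^ i := by rw [← pow_add]; congr 1; omega
  rw [this]; ring

/-- the four-fold product -/
def Q (D E : ℕ) : ArithmeticFunction ℤ := ((ζ : ArithmeticFunction ℤ) * A D) * (A E * A (D * E))

lemma Q_symm (D E : ℕ) : Q D E = Q E D := by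
  unfold Q; rw [mul_comm E D]; ring

lemma Q_nonneg (D E m : ℕ) : 0 ≤ Q D E m := by
  have hm : (Q D E).IsMultiplicative :=
    ((isMultiplicative_zeta.natCast).mul (A_mult D)).mul ((A_mult E).mul (A_mult _))
  refine nonneg_of_prime_pow hm (fun p k hp => ?_) m
  have hz : ∀ D k, 0 ≤ ((ζ : ArithmeticFunction ℤ) * A D) (p ^ k) := fun D k => zA_nonneg D _
  rcases tri E p with h | h | h
  · refine mul_nonneg_prime_pow hp (hz D) (fun k => ?_) k
    rw [AA_prime_pow D E hp, h]
    exact mul_nonneg (by positivity) (geom_nonneg (tri D p) k)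
  · refine mul_nonneg_prime_pow hp (hz D) (fun k => ?_) k
    rw [AA_prime_pow D E hp, h]
    exact mul_nonneg (by positivity) (geom_nonneg (tri D p) k)
  · rw [Q_symm]
    refine mul_nonneg_prime_pow hp (hz E) (fun k => ?_) k
    rw [AA_prime_pow E D hp, h, neg_one_geom_sum]
    split_ifs with hk
    · simp
    · rw [mul_one]
      have : Even k := by
        rcases Nat.even_or_odd k with h | h
        · exact h
        · exact absurd (by simpa using h.add_one) hk
      exact this.pow_nonneg _

lemma zA_one (D : ℕ) : ((ζ : ArithmeticFunction ℤ) * A D) 1 = 1 :=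
  ((isMultiplicative_zeta.natCast).mul (A_mult D)).1
lemma Q_one (D E : ℕ) : Q D E 1 = 1 :=
  (((isMultiplicative_zeta.natCast).mul (A_mult D)).mul ((A_mult E).mul (A_mult _))).1

end KR

end

section
namespace DB

lemma le_two_pow (k : ℕ) : (k : ℝ) + 1 ≤ 2 ^ k := by
  have : k < 2 ^ k := Nat.lt_two_pow_self
  exact_mod_cast this

lemma divisor_bound {δ : ℝ} (hδ : 0 < δ) :
    ∃ C : ℝ, 1 ≤ C ∧ ∀ m : ℕ, m ≠ 0 → (m.divisors.card : ℝ) ≤ C * (m : ℝ) ^ δ := by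
  set C0 : ℝ := max 1 (1 / (δ * Real.log 2)) with hC0
  have hC01 : 1 ≤ C0 := le_max_left _ _
  have hl2 : 0 < Real.log 2 := Real.log_pos (by norm_num)
  have hC02 : 1 ≤ C0 * (δ * Real.log 2) := by
    have : 1 / (δ * Real.log 2) ≤ C0 := le_max_right _ _
    rwa [div_le_iff₀ (by positivity)] at this
  obtain ⟨M, hM⟩ := exists_nat_gt ((2 : ℝ) ^ (1 / δ))
  refine ⟨C0 ^ M, one_le_pow₀ hC01, fun m hm => ?_⟩
  have key : ∀ p k : ℕ, p.Prime → (k : ℝ) + 1 ≤ (if p < M then C0 else 1) * ((p : ℝ) ^ δ) ^ k := by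
    intro p k hp
    have hp0 : (0 : ℝ) ≤ p := by positivity
    have hp2 : (2 : ℝ) ≤ p := by exact_mod_cast hp.two_le
    split_ifs with h
    · have h1 : (2 : ℝ) ^ δ ≤ (p : ℝ) ^ δ := Real.rpow_le_rpow (by norm_num) hp2 hδ.le
      have h2 : 1 + k * (δ * Real.log 2) ≤ ((2 : ℝ) ^ δ) ^ k := by
        rw [← Real.rpow_natCast, ← Real.rpow_mul (by norm_num), Real.rpow_def_of_pos (by norm_num)]
        have := Real.add_one_le_exp (Real.log 2 * (δ * k))
        linarith
      have h3 : ((2 : ℝ) ^ δ) ^ k ≤ ((p : ℝ) ^ δ) ^ k := by gcongr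
      calc (k : ℝ) + 1 ≤ C0 * (1 + k * (δ * Real.log 2)) := by
            have : (k : ℝ) * 1 ≤ k * (C0 * (δ * Real.log 2)) := by gcongr
            nlinarith
        _ ≤ _ := by gcongr; exact h2.trans h3
    · have h1 : (2 : ℝ) ≤ (p : ℝ) ^ δ := by
        have h2 : (2 : ℝ) ^ (1 / δ) ≤ p := by
          push Not at h
          exact hM.le.trans (by exact_mod_cast h)
        calc (2 : ℝ) = ((2 : ℝ) ^ (1 / δ)) ^ δ := by
              rw [← Real.rpow_mul (by norm_num), one_div_mul_cancel hδ.ne', Real.rpow_one]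
          _ ≤ _ := by gcongr
      rw [one_mul]
      exact (le_two_pow k).trans (by gcongr)
  rw [Nat.card_divisors hm]
  push_cast
  calc ∏ p ∈ m.primeFactors, ((m.factorization p : ℝ) + 1)
      ≤ ∏ p ∈ m.primeFactors, ((if p < M then C0 else 1) * ((p : ℝ) ^ δ) ^ m.factorization p) :=
        Finset.prod_le_prod (fun p _ => by positivity)
          fun p hp => key p _ (Nat.prime_of_mem_primeFactors hp)
    _ = (∏ p ∈ m.primeFactors, (if p < M then C0 else 1)) * (m : ℝ) ^ δ := by
        rw [Finset.prod_mul_distrib]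
        congr 1
        have hmm : (m : ℝ) = ∏ p ∈ m.primeFactors, (p : ℝ) ^ m.factorization p := by
          conv_lhs => rw [Nat.prod_primeFactors_pow_factorization hm]
          push_cast; rfl
        conv_rhs => rw [hmm]
        rw [← Real.finsetProd_rpow _ _ (fun p _ => by positivity)]
        refine Finset.prod_congr rfl fun p _ => ?_
        rw [← Real.rpow_natCast, ← Real.rpow_natCast, ← Real.rpow_mul (by positivity),
          ← Real.rpow_mul (by positivity), mul_comm]
    _ ≤ _ := by
        gcongr
        rw [Finset.prod_ite]
        simp only [Finset.prod_const, one_pow, mul_one]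
        refine pow_le_pow_right₀ hC01 ?_
        have : (m.primeFactors.filter (· < M)) ⊆ Finset.range M := by
          intro p hp; simp at hp ⊢; exact hp.2
        simpa using Finset.card_le_card this

lemma euler_bound {δ : ℝ} (hδ : 0 < δ) :
    ∃ c : ℝ, 0 < c ∧ ∀ m : ℕ, m ≠ 0 → c * (m : ℝ) ^ (-δ) ≤ ∏ p ∈ m.primeFactors, (1 - 1 / (p : ℝ)) := by
  obtain ⟨C, hC1, hC⟩ := divisor_bound hδ
  refine ⟨C⁻¹, by positivity, fun m hm => ?_⟩
  have hm0 : (0 : ℝ) < m := by positivity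
  have hd : (0 : ℝ) < m.divisors.card := by
    exact_mod_cast Finset.card_pos.2 ⟨1, by simp [hm]⟩
  calc C⁻¹ * (m : ℝ) ^ (-δ) = (C * (m : ℝ) ^ δ)⁻¹ := by rw [Real.rpow_neg hm0.le, mul_inv]
    _ ≤ (m.divisors.card : ℝ)⁻¹ := by gcongr; exact hC m hm
    _ = ∏ p ∈ m.primeFactors, ((m.factorization p : ℝ) + 1)⁻¹ := by
        rw [Nat.card_divisors hm]; push_cast; rw [Finset.prod_inv_distrib]
    _ ≤ _ := by
        refine Finset.prod_le_prod (fun p _ => by positivity) fun p hp => ?_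
        have hpp := Nat.prime_of_mem_primeFactors hp
        have h1 : (1 : ℝ) ≤ m.factorization p := by
          exact_mod_cast hpp.factorization_pos_of_dvd hm (Nat.dvd_of_mem_primeFactors hp)
        have h2 : (2 : ℝ) ≤ p := by exact_mod_cast hpp.two_le
        calc ((m.factorization p : ℝ) + 1)⁻¹ ≤ (2 : ℝ)⁻¹ := by gcongr; linarith
          _ ≤ 1 - 1 / (p : ℝ) := by
            have : 1 / (p : ℝ) ≤ 1 / 2 := by gcongr
            norm_num at this ⊢; linarith

end DB

end

section
open DirichletCharacter KR ArithmeticFunction Complex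
open scoped ArithmeticFunction.zeta ComplexOrder

namespace SG

/-- the entire function (s-1)ζ(s) -/
noncomputable def Zf : ℂ → ℂ := LFunctionTrivChar₁ 1

lemma Zf_diff : Differentiable ℂ Zf := differentiable_LFunctionTrivChar₁ 1
lemma Zf_one : Zf 1 = 1 := by simp [Zf, LFunctionTrivChar₁]
lemma Zf_ne {s : ℂ} (hs : s ≠ 1) : Zf s = (s - 1) * riemannZeta s := by
  simp [Zf, LFunctionTrivChar₁, Function.update_of_ne hs, LFunctionTrivChar]

lemma Zf_real (σ : ℝ) : (Zf σ).im = 0 := by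
  rcases eq_or_ne (σ : ℂ) 1 with h | h
  · rw [h, Zf_one]; simp
  · have h1 : (riemannZeta σ).im = 0 := by
      rw [← conj_eq_iff_im, ← riemannZeta_conj, conj_ofReal]
    rw [Zf_ne h, mul_im, h1]; simp

lemma exists_delta0 : ∃ δ0 : ℝ, 0 < δ0 ∧ ∀ σ : ℝ, 1 - δ0 < σ → σ ≤ 1 → 0 < (Zf σ).re := by
  have hc : Continuous (fun σ : ℝ => (Zf σ).re) :=
    continuous_re.comp (Zf_diff.continuous.comp continuous_ofReal)
  have h1 : (0 : ℝ) < (Zf ((1 : ℝ) : ℂ)).re := by simp [Zf_one]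
  have := (hc.continuousAt (x := 1)).eventually (lt_mem_nhds h1)
  obtain ⟨e, he, h⟩ := Metric.eventually_nhds_iff.1 this
  refine ⟨e, he, fun σ h1 h2 => h ?_⟩
  rw [Real.dist_eq, abs_lt]; constructor <;> linarith

lemma exists_Zbound : ∃ C : ℝ, 1 ≤ C ∧ ∀ s ∈ Metric.sphere (2 : ℂ) (3 / 2), ‖Zf s‖ ≤ C := by
  obtain ⟨C, hC⟩ := (isCompact_sphere (2 : ℂ) (3 / 2)).exists_bound_of_continuousOn
    (f := Zf) Zf_diff.continuous.continuousOn
  exact ⟨max 1 C, le_max_left _ _, fun s hs => (hC s hs).trans (le_max_right _ _)⟩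

lemma hasSum_A (D : ℕ) [NeZero D] {s : ℂ} (hs : 1 < s.re) :
    LSeriesHasSum (fun m => ((A D : ArithmeticFunction ℤ) : ArithmeticFunction ℂ) m) s
      (LFunction (chi D) s) := by
  have : (fun m => ((A D : ArithmeticFunction ℤ) : ArithmeticFunction ℂ) m) =
      fun m : ℕ => chi D (m : ZMod (4 * D)) := by
    funext m; rw [chi_apply]; rfl
  rw [this, LFunction_eq_LSeries _ hs]
  exact (LSeriesSummable_of_one_lt_re (chi D) hs).LSeriesHasSum

lemma hasSum_zeta {s : ℂ} (hs : 1 < s.re) :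
    LSeriesHasSum (fun m => (((ζ : ArithmeticFunction ℤ) : ArithmeticFunction ℤ) : ArithmeticFunction ℂ) m) s
      (riemannZeta s) := by
  have := LSeriesHasSum_zeta hs
  convert this using 2 with m
  simp [natCoe_apply]

lemma hasSum_zA (D : ℕ) [NeZero D] {s : ℂ} (hs : 1 < s.re) :
    LSeriesHasSum (fun m => ((((ζ : ArithmeticFunction ℤ) * A D) m : ℤ) : ℂ)) s
      (riemannZeta s * LFunction (chi D) s) := by
  have := LSeriesHasSum_mul (hasSum_zeta hs) (hasSum_A D hs)
  rw [← intCoe_mul] at this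
  exact this

lemma hasSum_Q (D E : ℕ) [NeZero D] [NeZero E] {s : ℂ} (hs : 1 < s.re) :
    LSeriesHasSum (fun m => ((Q D E m : ℤ) : ℂ)) s
      ((riemannZeta s * LFunction (chi D) s) * (LFunction (chi E) s * LFunction (chi (D * E)) s)) := by
  have := LSeriesHasSum_mul (LSeriesHasSum_mul (hasSum_zeta hs) (hasSum_A D hs))
    (LSeriesHasSum_mul (hasSum_A E hs) (hasSum_A (D * E) hs))
  rw [← intCoe_mul, ← intCoe_mul, ← intCoe_mul] at this
  exact this

lemma nonneg_at_one {a : ℕ → ℂ} (ha0 : ∀ m, 0 ≤ (a m).re ∧ (a m).im = 0) {G : ℂ → ℂ}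
    (hG : Continuous G) (hGa : ∀ s, 1 < s.re → G s = (s - 1) * LSeries a s) :
    ∃ l : ℝ, 0 ≤ l ∧ G 1 = l := by
  have key : ∀ σ : ℝ, 1 < σ → 0 ≤ G σ := by
    intro σ hσ
    rw [hGa σ (by simpa using hσ)]
    refine mul_nonneg ?_ ?_
    · rw [← ofReal_one, ← ofReal_sub]; exact_mod_cast (by linarith)
    · refine tsum_nonneg fun m => ?_
      refine LSeries.term_nonneg ?_ σ
      rw [Complex.nonneg_iff]; exact ⟨(ha0 m).1, (ha0 m).2.symm⟩
  have h1 : Filter.Tendsto (fun σ : ℝ => G σ) (nhdsWithin 1 (Set.Ioi 1)) (nhds (G ((1 : ℝ) : ℂ))) :=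
    ((hG.comp continuous_ofReal).tendsto 1).mono_left nhdsWithin_le_nhds
  have h2 : 0 ≤ G ((1 : ℝ) : ℂ) :=
    ge_of_tendsto h1 (by filter_upwards [self_mem_nhdsWithin] with σ hσ using key σ hσ)
  rw [Complex.nonneg_iff] at h2
  refine ⟨(G 1).re, by simpa using h2.1, ?_⟩
  apply Complex.ext
  · simp
  · simpa using h2.2.symm

lemma L_sphere (D : ℕ) [NeZero D] (hD : ¬ IsSquare D) {s : ℂ} (hs : s ∈ Metric.sphere (2 : ℂ) (3 / 2)) :
    ‖LFunction (chi D) s‖ ≤ 28 * D := by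
  rw [mem_sphere_iff_norm] at hs
  have h1 : 1 / 2 ≤ s.re := by
    have := (abs_le.1 (abs_re_le_norm (s - 2))).1
    simp at this; linarith
  have h2 : ‖s‖ ≤ 7 / 2 := by
    have := norm_add_le (s - 2) 2
    simp at this; rw [hs] at this; linarith
  refine (LB.norm_LFunction_le (chi D) (chi_ne_one hD) (by linarith)).trans ?_
  rw [div_le_iff₀ (by linarith)]
  push_cast
  have hD : (0 : ℝ) ≤ D := by positivity
  nlinarith [mul_nonneg (norm_nonneg s) hD, mul_le_mul_of_nonneg_right h2 hD, mul_le_mul_of_nonneg_right h1 hD]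

lemma L_real (D : ℕ) [NeZero D] (hD : ¬ IsSquare D) {σ : ℝ} (hσ : 0 < σ) :
    LFunction (chi D) σ = ((LFunction (chi D) σ).re : ℂ) := by
  apply Complex.ext
  · simp
  · simpa using LB.LFunction_real (chi D) (chi_ne_one hD) (chi_im D) hσ

/-- value at 1 -/
noncomputable def L1 (D : ℕ) : ℝ := if h : D = 0 then 0 else
  haveI : NeZero D := ⟨h⟩
  (LFunction (chi D) 1).re

lemma L1_eq (D : ℕ) [h : NeZero D] (hD : ¬ IsSquare D) : LFunction (chi D) 1 = (L1 D : ℂ) := by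
  have := L_real D hD (σ := 1) one_pos
  rw [ofReal_one] at this
  rw [L1, dif_neg h.out]; exact this

lemma zA_ok (D : ℕ) : (∀ m, 0 ≤ (((((ζ : ArithmeticFunction ℤ) * A D) m : ℤ) : ℂ)).re ∧
    (((((ζ : ArithmeticFunction ℤ) * A D) m : ℤ) : ℂ)).im = 0) := by
  intro m
  rw [intCast_re, intCast_im]
  exact ⟨by exact_mod_cast zA_nonneg D m, rfl⟩

lemma L1_pos (D : ℕ) [h : NeZero D] (hD : ¬ IsSquare D) : 0 < L1 D := by
  obtain ⟨l, hl, hl'⟩ := nonneg_at_one (zA_ok D) (G := fun s => Zf s * LFunction (chi D) s)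
    (Zf_diff.mul (differentiable_LFunction (chi_ne_one hD))).continuous (fun s hs => by
      rw [(hasSum_zA D hs).LSeries_eq, Zf_ne (by rintro rfl; simp at hs)]; ring)
  simp only [Zf_one, one_mul, L1_eq D hD] at hl'
  have h0 := LFunction_apply_one_ne_zero (chi_ne_one hD)
  rw [L1_eq D hD] at h0
  have : L1 D = l := by exact_mod_cast hl'
  rw [this]
  refine lt_of_le_of_ne hl ?_
  rintro rfl
  rw [this] at h0; simp at h0

lemma L1_le (D : ℕ) [h : NeZero D] (hD : ¬ IsSquare D) : L1 D ≤ Real.log (4 * D) + 1 := by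
  have := LB.norm_LFunction_one_le (chi D) (chi_ne_one hD)
  rw [L1_eq D hD, norm_real, Real.norm_eq_abs] at this
  push_cast at this
  exact (le_abs_self _).trans this

end SG

end

section
open DirichletCharacter KR ArithmeticFunction Complex
open scoped ArithmeticFunction.zeta

namespace SG

lemma L1_le' (D : ℕ) [h : NeZero D] (hD : ¬ IsSquare D) : L1 D ≤ 28 * D := by
  have h1 : (1 : ℝ) ≤ D := by exact_mod_cast NeZero.pos D
  have := Real.log_le_sub_one_of_pos (show (0 : ℝ) < 4 * D by positivity)
  have := L1_le D hD
  linarith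

lemma solve {η l B m : ℝ} (hη : 0 < η) (hB : 0 < B) (h : 1 / 2 ≤ 3 * l / η * (32 * B) ^ (4 * η)) (hm : m = l) :
    η / 6 * (32 * B) ^ (-(4 * η)) ≤ m := by
  subst hm
  have hp : 0 < (32 * B) ^ (4 * η) := by positivity
  rw [Real.rpow_neg (by positivity), ← div_eq_mul_inv, div_le_iff₀ hp]
  have : 3 * m / η * (32 * B) ^ (4 * η) = (3 * m * (32 * B) ^ (4 * η)) / η := by ring
  rw [this, le_div_iff₀ hη] at h
  linarith

lemma caseA {C : ℝ} (hC1 : 1 ≤ C) (hC : ∀ s ∈ Metric.sphere (2 : ℂ) (3 / 2), ‖Zf s‖ ≤ C)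
    {σ : ℝ} (h78 : 7 / 8 ≤ σ) (hσ1 : σ < 1) (hZ : 0 < (Zf σ).re)
    (D : ℕ) [NeZero D] (hD : ¬ IsSquare D) (hL : 0 ≤ (LFunction (chi D) σ).re) :
    (1 - σ) / 6 * (32 * (C * (28 * D))) ^ (-(4 * (1 - σ))) ≤ L1 D := by
  have h1 : (1 : ℝ) ≤ D := by exact_mod_cast NeZero.pos D
  have hB1 : 1 ≤ C * (28 * D) := by nlinarith
  have hLp := L1_pos D hD
  have := est_main (zA_ok D) (by rw [zA_one]; simp) (G := fun s => Zf s * LFunction (chi D) s)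
    (Zf_diff.mul (differentiable_LFunction (chi_ne_one hD)))
    (fun s hs => (hasSum_zA D hs).LSeriesSummable)
    (fun s hs => by
      rw [(hasSum_zA D hs).LSeries_eq, Zf_ne (by rintro rfl; simp at hs)]; ring)
    hB1 (fun s hs => by
      rw [norm_mul]; gcongr
      · exact hC s hs
      · exact L_sphere D hD hs)
    (by
      rw [Zf_one, one_mul, L1_eq D hD, norm_real, Real.norm_eq_abs, abs_of_pos hLp]
      have := L1_le' D hD; nlinarith)
    (l := L1 D) hLp.le (by rw [Zf_one, one_mul, L1_eq D hD]) (σ := σ)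
    (g := (Zf σ).re * (LFunction (chi D) σ).re) h78 hσ1 (by
      rw [ofReal_mul, ← L_real D hD (by linarith)]
      congr 1
      apply Complex.ext
      · simp
      · simpa using Zf_real σ)
  refine solve (by linarith) (by linarith) (this.trans ?_) rfl
  have : (Zf σ).re * (LFunction (chi D) σ).re / (σ - 1) ≤ 0 :=
    div_nonpos_of_nonneg_of_nonpos (by positivity) (by linarith)
  linarith

lemma Q_ok (D E : ℕ) : (∀ m, 0 ≤ (((Q D E m : ℤ) : ℂ)).re ∧ (((Q D E m : ℤ) : ℂ)).im = 0) := by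
  intro m
  rw [intCast_re, intCast_im]
  exact ⟨by exact_mod_cast Q_nonneg D E m, rfl⟩

lemma caseB1 {C : ℝ} (hC1 : 1 ≤ C) (hC : ∀ s ∈ Metric.sphere (2 : ℂ) (3 / 2), ‖Zf s‖ ≤ C)
    {σ : ℝ} (h78 : 7 / 8 ≤ σ) (hσ1 : σ < 1)
    (D E : ℕ) [NeZero D] [NeZero E] (hD : ¬ IsSquare D) (hE : ¬ IsSquare E) (hDE : ¬ IsSquare (D * E))
    (hL : LFunction (chi D) σ = 0) :
    (1 - σ) / 6 * (32 * (C * (28 * D) * ((28 * E) * (28 * (D * E))))) ^ (-(4 * (1 - σ))) ≤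
      L1 D * (L1 E * L1 (D * E)) := by
  have h1 : (1 : ℝ) ≤ D := by exact_mod_cast NeZero.pos D
  have h2 : (1 : ℝ) ≤ E := by exact_mod_cast NeZero.pos E
  have h3 : (1 : ℝ) ≤ D * E := by nlinarith
  have hB1 : 1 ≤ C * (28 * D) * ((28 * E) * (28 * (D * E))) :=
    one_le_mul_of_one_le_of_one_le (one_le_mul_of_one_le_of_one_le hC1 (by linarith))
      (one_le_mul_of_one_le_of_one_le (by linarith) (by linarith))
  have hLp := L1_pos D hD
  have hLp2 := L1_pos E hE
  have hLp3 := L1_pos (D * E) hDE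
  have e1 : ∀ s ∈ Metric.sphere (2 : ℂ) (3 / 2), ‖LFunction (chi (D * E)) s‖ ≤ 28 * (D * E) := by
    intro s hs
    have := L_sphere (D * E) hDE hs
    push_cast at this; exact this
  have e2 : L1 (D * E) ≤ 28 * (D * E) := by
    have := L1_le' (D * E) hDE
    push_cast at this; exact this
  have := est_main (Q_ok D E) (by rw [Q_one]; simp)
    (G := fun s => Zf s * LFunction (chi D) s * (LFunction (chi E) s * LFunction (chi (D * E)) s))
    ((Zf_diff.mul (differentiable_LFunction (chi_ne_one hD))).mul
      ((differentiable_LFunction (chi_ne_one hE)).mul (differentiable_LFunction (chi_ne_one hDE))))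
    (fun s hs => (hasSum_Q D E hs).LSeriesSummable)
    (fun s hs => by
      rw [(hasSum_Q D E hs).LSeries_eq, Zf_ne (by rintro rfl; simp at hs)]; ring)
    hB1 (fun s hs => by
      rw [norm_mul, norm_mul, norm_mul]; gcongr
      · exact hC s hs
      · exact L_sphere D hD hs
      · exact L_sphere E hE hs
      · exact e1 s hs)
    (by
      rw [Zf_one, one_mul, L1_eq D hD, L1_eq E hE, L1_eq (D * E) hDE, norm_mul, norm_mul, norm_real, norm_real,
        norm_real, Real.norm_eq_abs, Real.norm_eq_abs, Real.norm_eq_abs, abs_of_pos hLp, abs_of_pos hLp2,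
        abs_of_pos hLp3]
      gcongr
      · have := L1_le' D hD; nlinarith
      · exact L1_le' E hE)
    (l := L1 D * (L1 E * L1 (D * E))) (by positivity)
    (by rw [Zf_one, one_mul, L1_eq D hD, L1_eq E hE, L1_eq (D * E) hDE]; push_cast; rfl) (σ := σ)
    (g := 0) h78 hσ1 (by rw [hL]; simp)
  refine solve (by linarith) (by linarith) (this.trans ?_) rfl
  simp

lemma changeLevel_eq (D E : ℕ) [NeZero D] [NeZero E] (hDE : IsSquare (D * E)) :
    changeLevel (show 4 * D ∣ 4 * (D * E) from ⟨E, by ring⟩) (chi D) =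
      changeLevel (show 4 * E ∣ 4 * (D * E) from ⟨D, by ring⟩) (chi E) := by
  apply MulChar.ext
  intro a
  rw [changeLevel_eq_cast_of_dvd, changeLevel_eq_cast_of_dvd, ← ZMod.natCast_val, ← ZMod.natCast_val,
    chi_apply, chi_apply]
  congr 1
  have hco : ((a : ZMod (4 * (D * E))).val).Coprime (4 * (D * E)) := ZMod.val_coe_unit_coprime a
  set m := (a : ZMod (4 * (D * E))).val
  obtain ⟨r, hr⟩ := hDE
  have h1 := mul_left D E m
  have h0 := ne_zero_of_coprime hco
  rw [hr, mul_left] at h1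
  rw [hr, mul_left] at h0
  rcases tri r m with h | h | h <;> rcases tri D m with h' | h' | h' <;> rcases tri E m with h'' | h'' | h'' <;>
    simp [h, h', h''] at h1 h0 ⊢

lemma prod_bounds (D N : ℕ) [NeZero D] :
    ∃ P : ℝ, (∏ p ∈ N.primeFactors, (1 - chi D (p : ZMod (4 * D)) * (p : ℂ) ^ (-1 : ℂ))) = (P : ℂ) ∧
      (∏ p ∈ N.primeFactors, (1 - 1 / (p : ℝ))) ≤ P ∧ P * (∏ p ∈ N.primeFactors, (1 - 1 / (p : ℝ))) ≤ 1 := by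
  refine ⟨∏ p ∈ N.primeFactors, (1 - (kr D p : ℝ) / p), ?_, ?_, ?_⟩
  · push_cast
    refine Finset.prod_congr rfl fun p _ => ?_
    rw [chi_apply, cpow_neg_one]; rfl
  · refine Finset.prod_le_prod (fun p hp => ?_) fun p hp => ?_
    · have : (2 : ℝ) ≤ p := by exact_mod_cast (Nat.prime_of_mem_primeFactors hp).two_le
      rw [sub_nonneg, div_le_one (by linarith)]; linarith
    · gcongr
      rcases tri D p with h | h | h <;> simp [h]
  · rw [← Finset.prod_mul_distrib]
    refine Finset.prod_le_one (fun p hp => ?_) fun p hp => ?_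
    all_goals
      have h2 : (2 : ℝ) ≤ p := by exact_mod_cast (Nat.prime_of_mem_primeFactors hp).two_le
      have hi : 1 / (p : ℝ) ≤ 1 := by rw [div_le_one (by linarith)]; linarith
      have hi0 : 0 < 1 / (p : ℝ) := by positivity
      rw [div_eq_mul_one_div]
      generalize 1 / (p : ℝ) = x at hi hi0
      rcases tri D p with h | h | h <;> simp only [h, Int.cast_zero, Int.cast_one, Int.cast_neg] <;> nlinarith

lemma caseB2 (D E : ℕ) [NeZero D] [NeZero E] (hD : ¬ IsSquare D) (hE : ¬ IsSquare E) (hDE : IsSquare (D * E)) :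
    L1 D * (∏ p ∈ (4 * (D * E)).primeFactors, (1 - 1 / (p : ℝ))) ^ 2 ≤ L1 E := by
  have h1 := LFunction_changeLevel (show 4 * D ∣ 4 * (D * E) from ⟨E, by ring⟩) (chi D) (s := 1)
    (Or.inl (chi_ne_one hD))
  have h2 := LFunction_changeLevel (show 4 * E ∣ 4 * (D * E) from ⟨D, by ring⟩) (chi E) (s := 1)
    (Or.inl (chi_ne_one hE))
  rw [changeLevel_eq D E hDE, h2] at h1
  obtain ⟨P, hP1, hP2, hP3⟩ := prod_bounds D (4 * (D * E))
  obtain ⟨P', hP1', hP2', hP3'⟩ := prod_bounds E (4 * (D * E))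
  rw [hP1, hP1', L1_eq D hD, L1_eq E hE] at h1
  have h3 : L1 E * P' = L1 D * P := by exact_mod_cast h1
  set R := ∏ p ∈ (4 * (D * E)).primeFactors, (1 - 1 / (p : ℝ)) with hR
  have hR0 : 0 ≤ R := Finset.prod_nonneg fun p hp => by
    have : (2 : ℝ) ≤ p := by exact_mod_cast (Nat.prime_of_mem_primeFactors hp).two_le
    rw [sub_nonneg, div_le_one (by linarith)]; linarith
  have hLp := L1_pos D hD
  have hLp2 := L1_pos E hE
  calc L1 D * R ^ 2 = (L1 D * R) * R := by ring
    _ ≤ (L1 D * P) * R := by gcongr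
    _ = L1 E * (P' * R) := by rw [← h3]; ring
    _ ≤ L1 E * 1 := by gcongr
    _ = _ := mul_one _

end SG

end

section
open DirichletCharacter KR ArithmeticFunction Complex

namespace SG

lemma rpow_mono_neg {x a b : ℝ} (hx : 1 ≤ x) (h : a ≤ b) : x ^ (-b) ≤ x ^ (-a) :=
  Real.rpow_le_rpow_of_exponent_le hx (by linarith)

theorem siegel {δ : ℝ} (hδ : 0 < δ) : ∃ c : ℝ, 0 < c ∧ ∀ (D : ℕ) [NeZero D], ¬ IsSquare D →
    c * (D : ℝ) ^ (-δ) ≤ L1 D := by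
  obtain ⟨δ0, hδ0, hZ⟩ := exists_delta0
  obtain ⟨C, hC1, hC⟩ := exists_Zbound
  set η := min (δ / 20) (min (1 / 8) (δ0 / 2)) with hη
  have hη0 : 0 < η := by positivity
  have hη1 : η ≤ δ / 20 := min_le_left _ _
  have hη2 : η ≤ 1 / 8 := (min_le_right _ _).trans (min_le_left _ _)
  have hη3 : η ≤ δ0 / 2 := (min_le_right _ _).trans (min_le_right _ _)
  by_cases hcase : ∀ (D : ℕ) [NeZero D], ¬ IsSquare D → ∀ σ : ℝ, 1 - η ≤ σ → σ < 1 → LFunction (chi D) σ ≠ 0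
  · refine ⟨η / 6 * (32 * (C * 28)) ^ (-(4 * η)), by positivity, fun D _ hD => ?_⟩
    have hD1 : (1 : ℝ) ≤ D := by exact_mod_cast NeZero.pos D
    have hL : 0 ≤ (LFunction (chi D) ((1 - η : ℝ) : ℂ)).re := by
      by_contra hneg
      push Not at hneg
      have hcont : Continuous (fun σ : ℝ => (LFunction (chi D) σ).re) :=
        continuous_re.comp ((differentiable_LFunction (chi_ne_one hD)).continuous.comp continuous_ofReal)
      have h1 : 0 < (LFunction (chi D) ((1 : ℝ) : ℂ)).re := by
        rw [ofReal_one, L1_eq D hD, ofReal_re]; exact L1_pos D hD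
      obtain ⟨σ, hσ, hσ0⟩ := intermediate_value_Icc (show 1 - η ≤ 1 by linarith) hcont.continuousOn
        (show (0 : ℝ) ∈ Set.Icc _ _ from ⟨hneg.le, h1.le⟩)
      simp only at hσ0
      have hne : σ ≠ 1 := by rintro rfl; rw [hσ0] at h1; exact lt_irrefl _ h1
      refine hcase D hD σ hσ.1 (lt_of_le_of_ne hσ.2 hne) ?_
      rw [L_real D hD (by linarith [hσ.1]), hσ0]; simp
    have := caseA hC1 hC (σ := 1 - η) (by linarith) (by linarith)
      (hZ _ (by linarith) (by linarith)) D hD hL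
    rw [sub_sub_cancel] at this
    refine le_trans ?_ this
    rw [show 32 * (C * (28 * (D : ℝ))) = (32 * (C * 28)) * D by ring,
      Real.mul_rpow (x := 32 * (C * 28)) (by positivity) (by positivity), mul_assoc]
    have := rpow_mono_neg hD1 (show 4 * η ≤ δ by linarith)
    gcongr
  · push Not at hcase
    obtain ⟨E, hE0, hE, σ, hσ1, hσ2, hzero⟩ := hcase
    obtain ⟨c2, hc2, hc2'⟩ := DB.euler_bound hη0
    have hE1 : (1 : ℝ) ≤ E := by exact_mod_cast NeZero.pos E
    have hLE := L1_pos E hE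
    set K : ℝ := 32 * C * 28 ^ 3 * E ^ 2 with hK
    have hK0 : 1 ≤ K := by
      have : 1 ≤ (E : ℝ) ^ 2 := one_le_pow₀ hE1
      rw [hK]
      calc (1 : ℝ) ≤ 32 * 1 * 28 ^ 3 * 1 := by norm_num
        _ ≤ _ := by gcongr
    set F : ℝ := (1 / η + 1) * (4 * E) ^ η with hF
    have hF0 : 0 < F := by positivity
    set cA : ℝ := (1 - σ) / 6 * K ^ (-(4 * η)) / (L1 E * F) with hcA
    have hcA0 : 0 < cA := by have : 0 < 1 - σ := by linarith
                             positivity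
    set cB : ℝ := L1 E * (c2 * (4 * E) ^ (-η)) ^ 2 with hcB
    have hcB0 : 0 < cB := by positivity
    refine ⟨min cA cB, lt_min hcA0 hcB0, fun D _ hD => ?_⟩
    have hD1 : (1 : ℝ) ≤ D := by exact_mod_cast NeZero.pos D
    have hLD := L1_pos D hD
    by_cases hsq : IsSquare (E * D)
    · have h1 := caseB2 E D hE hD hsq
      have h2 := hc2' (4 * (E * D)) (NeZero.ne _)
      refine le_trans ?_ h1
      calc min cA cB * (D : ℝ) ^ (-δ) ≤ cB * (D : ℝ) ^ (-(2 * η)) := by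
            have := rpow_mono_neg hD1 (show 2 * η ≤ δ by linarith)
            gcongr
            exact min_le_right _ _
        _ = L1 E * (c2 * ((4 * (E * D) : ℕ) : ℝ) ^ (-η)) ^ 2 := by
            rw [hcB]
            push_cast
            rw [show (4 * ((E : ℝ) * D)) = (4 * E) * D by ring, Real.mul_rpow (x := 4 * (E : ℝ)) (by positivity) (by positivity),
              show -(2 * η) = (-η) * (2 : ℕ) by push_cast; ring, Real.rpow_mul (by positivity), Real.rpow_natCast]
            ring
        _ ≤ _ := by gcongr
    · have h1 := caseB1 hC1 hC (σ := σ) (by linarith) hσ2 E D hE hD hsq hzero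
      have h2 : L1 (E * D) ≤ F * (D : ℝ) ^ η := by
        have a1 := L1_le (E * D) hsq
        have a2 := Real.log_le_rpow_div (x := 4 * ((E * D : ℕ) : ℝ)) (by positivity) hη0
        push_cast at a1 a2
        rw [show (4 * ((E : ℝ) * D)) = (4 * E) * D by ring, Real.mul_rpow (x := 4 * (E : ℝ)) (by positivity) (by positivity)] at a2
        rw [show (4 * ((E : ℝ) * D)) = (4 * E) * D by ring] at a1
        have a3 : 1 ≤ (4 * (E : ℝ)) ^ η * (D : ℝ) ^ η :=
          one_le_mul_of_one_le_of_one_le (Real.one_le_rpow (by linarith) hη0.le) (Real.one_le_rpow hD1 hη0.le)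
        calc L1 (E * D) ≤ _ := a1
          _ ≤ (4 * (E : ℝ)) ^ η * (D : ℝ) ^ η / η + (4 * (E : ℝ)) ^ η * (D : ℝ) ^ η := by linarith
          _ = _ := by rw [hF]; ring
      have h3 : (1 - σ) / 6 * (K ^ (-(4 * η)) * (D : ℝ) ^ (-(8 * η))) ≤ L1 E * (L1 D * L1 (E * D)) := by
        refine le_trans ?_ h1
        have e : 32 * (C * (28 * (E : ℝ)) * (28 * D * (28 * (E * D)))) = K * (D : ℝ) ^ 2 := by rw [hK]; ring
        rw [e]
        have hKD : 1 ≤ K * (D : ℝ) ^ 2 := one_le_mul_of_one_le_of_one_le hK0 (one_le_pow₀ hD1)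
        have := rpow_mono_neg hKD (show 4 * (1 - σ) ≤ 4 * η by linarith)
        rw [Real.mul_rpow (y := (D : ℝ) ^ 2) (by positivity) (by positivity), ← Real.rpow_natCast (D : ℝ) 2,
          ← Real.rpow_mul (by positivity)] at this
        rw [← Real.rpow_natCast (D : ℝ) 2]
        rw [show ((2 : ℕ) : ℝ) * -(4 * η) = -(8 * η) by push_cast; ring] at this
        have : 0 ≤ (1 - σ) / 6 := by linarith
        gcongr
      have h4 : (1 - σ) / 6 * (K ^ (-(4 * η)) * (D : ℝ) ^ (-(8 * η))) ≤ L1 E * (L1 D * (F * (D : ℝ) ^ η)) := by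
        refine h3.trans ?_
        gcongr
      have h5 : cA * (D : ℝ) ^ (-(9 * η)) ≤ L1 D := by
        have hDη : 0 < (D : ℝ) ^ η := by positivity
        have e : (D : ℝ) ^ (-(9 * η)) = (D : ℝ) ^ (-(8 * η)) / (D : ℝ) ^ η := by
          rw [← Real.rpow_sub (by positivity)]; congr 1; ring
        rw [e, hcA, div_mul_div_comm, div_le_iff₀ (by positivity)]
        linarith
      refine le_trans ?_ h5
      have := rpow_mono_neg hD1 (show 9 * η ≤ δ by linarith)
      gcongr
      exact min_le_left _ _

end SG

end

section
open ArithmeticFunction KR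
open scoped ArithmeticFunction.zeta

namespace RT

/-- number of roots of `t^2 - n t + 1` mod `a` -/
noncomputable def rt (n : ℕ) (a : ℕ) : ℕ := Nat.card {t : ZMod a // t ^ 2 - n * t + 1 = 0}

lemma rt_one (n : ℕ) : rt n 1 = 1 := by
  unfold rt
  rw [Nat.card_eq_one_iff_unique]
  have : Subsingleton (ZMod 1) := inferInstanceAs (Subsingleton (Fin 1))
  exact ⟨inferInstance, ⟨⟨0, Subsingleton.elim _ _⟩⟩⟩

lemma rt_mul (n : ℕ) {a b : ℕ} (h : a.Coprime b) : rt n (a * b) = rt n a * rt n b := by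
  unfold rt
  rw [← Nat.card_prod]
  let e := ZMod.chineseRemainder h
  have he : ∀ x : ZMod (a * b), x ^ 2 - n * x + 1 = 0 ↔
      ((e x).1 ^ 2 - n * (e x).1 + 1 = 0 ∧ (e x).2 ^ 2 - n * (e x).2 + 1 = 0) := by
    intro x
    rw [← e.injective.eq_iff, Prod.ext_iff]
    simp
  refine Nat.card_congr ((e.toEquiv.subtypeEquiv (q := fun y : ZMod a × ZMod b => (y.1 ^ 2 - n * y.1 + 1 = 0 ∧ y.2 ^ 2 - n * y.2 + 1 = 0)) (fun x => he x)).trans ?_)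
  exact Equiv.subtypeProdEquivProd (p := fun t : ZMod a => t ^ 2 - n * t + 1 = 0)
    (q := fun t : ZMod b => t ^ 2 - n * t + 1 = 0)

lemma hensel {p : ℕ} (hp : p.Prime) (hp2 : p ≠ 2) {D : ℤ} (hD : ¬ (p : ℤ) ∣ D) {b0 : ℤ}
    (h0 : (p : ℤ) ∣ b0 ^ 2 - D) (k : ℕ) : ∃ b : ℤ, (p : ℤ) ^ (k + 1) ∣ b ^ 2 - D := by
  induction k with
  | zero => exact ⟨b0, by simpa using h0⟩
  | succ k ih =>
    obtain ⟨b, q, hq⟩ := ih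
    have hpb : ¬ (p : ℤ) ∣ b := by
      intro h
      apply hD
      have h1 : (p : ℤ) ∣ b ^ 2 - D := by rw [hq]; exact Dvd.intro _ (by rw [pow_succ' _ k, mul_assoc])
      have h2 := h.mul_left b
      have : D = b * b - (b ^ 2 - D) := by ring
      rw [this]; exact dvd_sub h2 h1
    have hp' : Prime (p : ℤ) := Nat.prime_iff_prime_int.1 hp
    have hp2b : ¬ (p : ℤ) ∣ 2 * b := by
      intro h
      rcases hp'.dvd_or_dvd h with h | h
      · have : p ∣ 2 := by exact_mod_cast h
        exact hp2 ((Nat.prime_dvd_prime_iff_eq hp Nat.prime_two).1 this)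
      · exact hpb h
    obtain ⟨u, v, huv⟩ := (Prime.coprime_iff_not_dvd hp').2 hp2b
    refine ⟨b - (p : ℤ) ^ (k + 1) * (v * q), ?_⟩
    refine ⟨q * u + (p : ℤ) ^ k * (v * q) ^ 2, ?_⟩
    have e1 : (b - (p : ℤ) ^ (k + 1) * (v * q)) ^ 2 - D = (b ^ 2 - D) - (p : ℤ) ^ (k + 1) * q * (v * (2 * b))
      + ((p : ℤ) ^ (k + 1)) ^ 2 * (v * q) ^ 2 := by ring
    have e2 : v * (2 * b) = 1 - u * p := by linarith
    rw [e1, e2, hq]; ring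

variable {n D : ℕ}

lemma rt_nonneg_pow {p : ℕ} (hp : p.Prime) (hnD : D + 4 = n ^ 2) (hco : ¬ p ∣ 4 * D) (hχ : kr D p = 1) (k : ℕ) :
    2 ≤ rt n (p ^ (k + 1)) := by
  have hp2 : p ≠ 2 := by
    rintro rfl; exact hco ⟨2 * D, by ring⟩
  have hpD : ¬ p ∣ D := fun h => hco (h.mul_left 4)
  have hpo : Odd p := hp.odd_of_ne_two hp2
  have : Fact p.Prime := ⟨hp⟩
  have hsq : IsSquare (((D : ℤ)) : ZMod p) := by
    unfold kr at hχ
    rw [if_pos hpo, ← jacobiSym.legendreSym.to_jacobiSym] at hχ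
    refine (legendreSym.eq_one_iff p ?_).1 hχ
    rw [Ne, ZMod.intCast_zmod_eq_zero_iff_dvd]; exact_mod_cast hpD
  obtain ⟨c, hc⟩ := hsq
  have h0 : (p : ℤ) ∣ (c.val : ℤ) ^ 2 - D := by
    rw [← ZMod.intCast_zmod_eq_zero_iff_dvd]
    push_cast; push_cast at hc; rw [hc]; simp; ring
  obtain ⟨b, hb⟩ := hensel hp hp2 (D := (D : ℤ)) (by exact_mod_cast hpD) h0 k
  set q := p ^ (k + 1) with hq
  have : NeZero q := ⟨pow_ne_zero _ hp.ne_zero⟩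
  have hbD : ((b : ZMod q)) ^ 2 = D := by
    have : ((b ^ 2 - D : ℤ) : ZMod q) = 0 := by
      rw [ZMod.intCast_zmod_eq_zero_iff_dvd]; rw [hq]; push_cast; exact hb
    push_cast at this; exact sub_eq_zero.1 this
  have hu2 : IsUnit (2 : ZMod q) := by
    have := (ZMod.isUnit_iff_coprime 2 q).2 (by
      rw [hq]; exact Nat.Coprime.pow_right _ ((Nat.coprime_primes Nat.prime_two hp).2 hp2.symm))
    exact_mod_cast this
  have huD : IsUnit (D : ZMod q) := by
    refine (ZMod.isUnit_iff_coprime D q).2 ?_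
    rw [hq]; exact Nat.Coprime.pow_right _ ((Nat.coprime_comm).1 ((hp.coprime_iff_not_dvd).2 hpD))
  have hub : IsUnit (b : ZMod q) := by
    rw [← hbD] at huD; exact (isUnit_pow_iff two_ne_zero).1 huD
  obtain ⟨i, hi⟩ := hu2.exists_right_inv
  have hn : (n : ZMod q) ^ 2 = D + 4 := by exact_mod_cast (congrArg (Nat.cast : ℕ → ZMod q) hnD).symm
  have hroot : ∀ s : ZMod q, s ^ 2 = D → ((n + s) * i) ^ 2 - n * ((n + s) * i) + 1 = 0 := by
    intro s hs
    have h4 : (4 : ZMod q) * i ^ 2 = 1 := by linear_combination (2 * i + 1) * hi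
    linear_combination (-i^2) * hn + i^2 * hs - h4 + ((n : ZMod q) * (n + s) * i ) * hi
  have hne : ((n : ZMod q) + b) * i ≠ (n + -b) * i := by
    intro h
    have h1 : (b : ZMod q) * (2 * i) = 0 := by linear_combination h
    rw [hi, mul_one] at h1
    rw [h1] at hub
    have h01 := isUnit_zero_iff.1 hub
    have : Fact (1 < q) := ⟨Nat.one_lt_pow (by omega) hp.one_lt⟩
    exact zero_ne_one h01
  unfold rt
  have : Nontrivial {t : ZMod q // t ^ 2 - n * t + 1 = 0} :=
    ⟨⟨_, hroot b hbD⟩, ⟨_, hroot (-b) (by rw [neg_sq]; exact hbD)⟩, fun h => hne (congrArg Subtype.val h)⟩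
  exact Finite.one_lt_card

end RT

end

section
open ArithmeticFunction KR
open scoped ArithmeticFunction.zeta

namespace RT

variable {n D : ℕ}

open Classical in
/-- indicator of positive squares -/
noncomputable def sqf : ArithmeticFunction ℤ :=
  ⟨fun m => if IsSquare m ∧ m ≠ 0 then 1 else 0, by simp⟩

lemma sqf_apply (m : ℕ) [Decidable (IsSquare m ∧ m ≠ 0)] : sqf m = if IsSquare m ∧ m ≠ 0 then 1 else 0 := by
  unfold sqf
  simp only [ArithmeticFunction.coe_mk]
  congr

lemma sqf_nonneg (m : ℕ) : 0 ≤ sqf m := by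
  classical
  rw [sqf_apply]; split_ifs <;> norm_num

lemma sqf_mult : sqf.IsMultiplicative := by
  classical
  constructor
  · rw [sqf_apply, if_pos ⟨⟨1, rfl⟩, one_ne_zero⟩]
  · intro m k h
    rw [sqf_apply, sqf_apply, sqf_apply]
    have key : (IsSquare (m * k) ∧ m * k ≠ 0) ↔ (IsSquare m ∧ m ≠ 0) ∧ (IsSquare k ∧ k ≠ 0) := by
      constructor
      · rintro ⟨⟨r, hr⟩, h0⟩
        obtain ⟨a, ha⟩ := exists_eq_pow_of_mul_eq_pow (a := m) (b := k) (c := r) (k := 2)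
          (by rw [Nat.isUnit_iff]; exact h) (by rw [hr]; ring)
        obtain ⟨b, hb⟩ := exists_eq_pow_of_mul_eq_pow (a := k) (b := m) (c := r) (k := 2)
          (by rw [Nat.isUnit_iff]; exact h.symm) (by rw [mul_comm, hr]; ring)
        exact ⟨⟨⟨a, by rw [ha]; ring⟩, left_ne_zero_of_mul h0⟩, ⟨⟨b, by rw [hb]; ring⟩, right_ne_zero_of_mul h0⟩⟩
      · rintro ⟨⟨h1, h2⟩, h3, h4⟩
        exact ⟨h1.mul h3, mul_ne_zero h2 h4⟩
    rw [if_congr key rfl rfl]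
    by_cases h1 : IsSquare m ∧ m ≠ 0
    · rw [if_pos h1, one_mul]; exact if_congr ⟨fun h => h.2, fun h => ⟨h1, h⟩⟩ rfl rfl
    · rw [if_neg h1, zero_mul, if_neg fun h => h1 h.1]

lemma sqf_pow {p : ℕ} (hp : p.Prime) (i : ℕ) : (if Even i then (1 : ℤ) else 0) ≤ sqf (p ^ i) := by
  classical
  split_ifs with h
  · rw [sqf_apply, if_pos ⟨h.isSquare_pow p, pow_ne_zero _ hp.ne_zero⟩]
  · exact sqf_nonneg _

lemma sqf_sum (N : ℕ) : ∑ m ∈ Finset.Icc 1 N, (sqf m : ℝ) ≤ Real.sqrt N := by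
  classical
  have h1 : ∑ m ∈ Finset.Icc 1 N, (sqf m : ℝ) = ((Finset.Icc 1 N).filter (fun m => IsSquare m ∧ m ≠ 0)).card := by
    rw [Finset.card_filter]; push_cast
    refine Finset.sum_congr rfl fun m _ => ?_
    rw [sqf_apply]; push_cast; rfl
  rw [h1]
  have h2 : (Finset.Icc 1 N).filter (fun m => IsSquare m ∧ m ≠ 0) ⊆ (Finset.Icc 1 (Nat.sqrt N)).image (fun k => k * k) := by
    intro m hm
    simp only [Finset.mem_filter, Finset.mem_Icc, Finset.mem_image] at hm ⊢
    obtain ⟨⟨h3, h4⟩, ⟨k, hk⟩, h5⟩ := hm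
    refine ⟨k, ⟨?_, ?_⟩, hk.symm⟩
    · rcases Nat.eq_zero_or_pos k with rfl | h
      · simp at hk; omega
      · exact h
    · rw [Nat.le_sqrt]; omega
  have h3 := (Finset.card_le_card h2).trans Finset.card_image_le
  simp at h3
  calc _ ≤ ((Nat.sqrt N : ℕ) : ℝ) := by exact_mod_cast h3
    _ ≤ _ := Real.nat_sqrt_le_real_sqrt

/-- root counting function supported on numbers coprime to four times the discriminant -/
noncomputable def Rf (n D : ℕ) : ArithmeticFunction ℤ :=
  ⟨fun a => kr (D * D) a * rt n a, by rw [KR.zero, zero_mul]⟩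

lemma Rf_apply (a : ℕ) : Rf n D a = kr (D * D) a * rt n a := rfl

lemma kr_sq_nonneg (D m : ℕ) : 0 ≤ kr (D * D) m := by rw [mul_left]; exact mul_self_nonneg _

lemma Rf_nonneg (a : ℕ) : 0 ≤ Rf n D a :=
  mul_nonneg (kr_sq_nonneg _ _) (by positivity)

lemma Rf_mult : (Rf n D).IsMultiplicative := by
  constructor
  · rw [Rf_apply, one, rt_one]; rfl
  · intro a b h
    rw [Rf_apply, Rf_apply, Rf_apply, mul_right, rt_mul n h]; push_cast; ring

lemma sum_even (k : ℕ) : ∑ i ∈ Finset.range (k + 1),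
    (if Even i then (1 : ℤ) else 0) * (if k - i = 0 then 1 else 2) = k + 1 := by
  induction k using Nat.twoStepInduction with
  | zero => decide
  | one => simp [Finset.sum_range_succ]
  | more k ih _ =>
    rw [Finset.sum_range_succ', Finset.sum_range_succ']
    have : ∀ i ∈ Finset.range (k + 1), (if Even (i + 1 + 1) then (1 : ℤ) else 0) *
        (if k + 2 - (i + 1 + 1) = 0 then 1 else 2) = (if Even i then (1 : ℤ) else 0) * (if k - i = 0 then 1 else 2) := by
      intro i _
      have e1 : Even (i + 1 + 1) ↔ Even i := by rw [Nat.even_add_one, Nat.even_add_one, not_not]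
      rw [show k + 2 - (i + 1 + 1) = k - i by omega]
      simp only [e1]
    rw [Finset.sum_congr rfl this, ih]
    simp; ring

lemma pp_ineq (hnD : D + 4 = n ^ 2) {p : ℕ} (hp : p.Prime) (k : ℕ) :
    (A (D * D) * A D) (p ^ k) ≤ (sqf * Rf n D) (p ^ k) ∧ 0 ≤ (A (D * D) * A D) (p ^ k) := by
  rw [mul_prime_pow _ _ hp, mul_prime_pow _ _ hp]
  have hR0 : ∀ i ∈ Finset.range (k + 1), 0 ≤ sqf (p ^ i) * Rf n D (p ^ (k - i)) := fun i _ =>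
    mul_nonneg (sqf_nonneg _) (Rf_nonneg _)
  have hlast : (if Even k then (1 : ℤ) else 0) ≤ ∑ i ∈ Finset.range (k + 1), sqf (p ^ i) * Rf n D (p ^ (k - i)) := by
    refine le_trans ?_ (Finset.single_le_sum hR0 (Finset.self_mem_range_succ k))
    rw [Nat.sub_self, pow_zero, Rf_mult.1, mul_one]
    exact sqf_pow hp k
  have hL : ∀ i, A (D * D) (p ^ i) * A D (p ^ (k - i)) = (kr D p ^ 2) ^ i * kr D p ^ (k - i) := by
    intro i
    rw [A_apply, A_apply, pow_right, pow_right, mul_left, sq]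
  simp only [hL]
  rcases tri D p with h | h | h
  · rcases Nat.eq_zero_or_pos k with rfl | hk
    · simp at hlast ⊢; exact hlast
    · have : ∑ i ∈ Finset.range (k + 1), (kr D p ^ 2) ^ i * kr D p ^ (k - i) = 0 := by
        refine Finset.sum_eq_zero fun i hi => ?_
        rw [h]
        rcases Nat.eq_zero_or_pos i with rfl | hi0
        · simp; omega
        · simp [hi0.ne']
      rw [this]
      exact ⟨Finset.sum_nonneg hR0, le_rfl⟩
  · simp only [h, one_pow, mul_one, Finset.sum_const, Finset.card_range, nsmul_eq_mul]
    refine ⟨?_, by positivity⟩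
    push_cast
    rw [← sum_even k]
    refine Finset.sum_le_sum fun i hi => ?_
    refine mul_le_mul (sqf_pow hp i) ?_ (by split_ifs <;> norm_num) (sqf_nonneg _)
    split_ifs with h0
    · rw [h0, pow_zero, Rf_mult.1]
    · obtain ⟨j, hj⟩ := Nat.exists_eq_succ_of_ne_zero h0
      rw [hj, Rf_apply, pow_right, mul_left, h]
      simp only [mul_one, one_pow, one_mul]
      have hco : ¬ p ∣ 4 * D := by
        intro hd
        have : kr D p = 0 := eq_zero_of_not_coprime (by rw [hp.coprime_iff_not_dvd]; exact not_not.2 hd)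
        rw [h] at this; norm_num at this
      exact_mod_cast rt_nonneg_pow hp hnD hco h j
  · have : ∑ i ∈ Finset.range (k + 1), (kr D p ^ 2) ^ i * kr D p ^ (k - i) = if Even k then 1 else 0 := by
      rw [h]
      simp only [even_two, Even.neg_pow, one_pow, one_mul]
      rw [Finset.sum_flip (f := fun i => (-1 : ℤ) ^ i), neg_one_geom_sum]
      simp only [Nat.even_add_one]
      split_ifs <;> tauto
    rw [this]
    exact ⟨hlast, by split_ifs <;> norm_num⟩

lemma conv_ineq (hnD : D + 4 = n ^ 2) (m : ℕ) :
    (A (D * D) * A D) m ≤ (sqf * Rf n D) m ∧ 0 ≤ (A (D * D) * A D) m := by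
  rcases eq_or_ne m 0 with rfl | hm
  · simp
  · rw [((A_mult (D * D)).mul (A_mult D)).multiplicative_factorization _ hm,
      (sqf_mult.mul Rf_mult).multiplicative_factorization _ hm]
    refine ⟨Finset.prod_le_prod (fun p hp => ?_) fun p hp => ?_, Finset.prod_nonneg fun p hp => ?_⟩
    · exact (pp_ineq hnD (Nat.prime_of_mem_primeFactors hp) _).2
    · exact (pp_ineq hnD (Nat.prime_of_mem_primeFactors hp) _).1
    · exact (pp_ineq hnD (Nat.prime_of_mem_primeFactors hp) _).2

end RT

end

section
open ArithmeticFunction KR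
open scoped Topology ComplexOrder

namespace RT

lemma lseries_le {f : ℕ → ℝ} (hf : ∀ m, 0 ≤ f m) {c1 c2 : ℝ} (h1 : 0 ≤ c1) (h2 : 0 ≤ c2)
    (hS : ∀ N : ℕ, ∑ m ∈ Finset.Icc 1 N, f m ≤ c1 * N + c2 * Real.sqrt N) {σ : ℝ} (hσ : 1 < σ) :
    LSeriesSummable (fun m => (f m : ℂ)) σ ∧
    ‖LSeries (fun m => (f m : ℂ)) σ‖ ≤ σ * (c1 / (σ - 1) + c2 / (σ - 1 / 2)) := by
  have hO : (fun N : ℕ => ∑ m ∈ Finset.Icc 1 N, f m) =O[Filter.atTop] fun N : ℕ => (N : ℝ) ^ (1 : ℝ) := by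
    refine Asymptotics.IsBigO.of_bound (c1 + c2) ?_
    filter_upwards [Filter.eventually_ge_atTop 1] with N hN
    have hN' : (1 : ℝ) ≤ N := by exact_mod_cast hN
    rw [Real.rpow_one, Real.norm_of_nonneg (Finset.sum_nonneg fun m _ => hf m), Real.norm_of_nonneg (by positivity)]
    have : Real.sqrt N ≤ N := by
      rw [Real.sqrt_le_left (by positivity)]; nlinarith
    nlinarith [hS N]
  refine ⟨LSeriesSummable_of_sum_norm_bigO_and_nonneg hO hf zero_le_one (by simpa using hσ), ?_⟩
  rw [LSeries_eq_mul_integral_of_nonneg f zero_le_one (by simpa using hσ) hO hf, norm_mul,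
    Complex.norm_of_nonneg (by linarith)]
  refine mul_le_mul_of_nonneg_left ?_ (by linarith)
  have i1 := (integrableOn_Ioi_rpow_of_lt (a := -σ) (c := 1) (by linarith) one_pos).const_mul c1
  have i2 := (integrableOn_Ioi_rpow_of_lt (a := -σ - 1 / 2) (c := 1) (by linarith) one_pos).const_mul c2
  have := MeasureTheory.norm_integral_le_of_norm_le (μ := MeasureTheory.volume.restrict (Set.Ioi 1))
    (f := fun t : ℝ => (∑ k ∈ Finset.Icc 1 ⌊t⌋₊, (f k : ℂ)) * (t : ℂ) ^ (-((σ : ℂ) + 1))) (i1.add i2) ?_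
  · refine this.trans (le_of_eq ?_)
    simp only [Pi.add_apply]
    rw [MeasureTheory.integral_add i1 i2, MeasureTheory.integral_const_mul, MeasureTheory.integral_const_mul,
      integral_Ioi_rpow_of_lt (by linarith) one_pos, integral_Ioi_rpow_of_lt (by linarith) one_pos]
    simp only [Real.one_rpow]
    have e1 : -1 / (-σ + 1) = 1 / (σ - 1) := by
      rw [show -σ + 1 = -(σ - 1) by ring, neg_div_neg_eq]
    have e2 : -1 / (-σ - 1 / 2 + 1) = 1 / (σ - 1 / 2) := by
      rw [show -σ - 1 / 2 + 1 = -(σ - 1 / 2) by ring, neg_div_neg_eq]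
    rw [e1, e2]; ring
  · filter_upwards [MeasureTheory.ae_restrict_mem measurableSet_Ioi] with t ht
    have ht1 : 1 < t := ht
    have ht0 : 0 < t := by linarith
    rw [norm_mul, ← Complex.ofReal_sum, Complex.norm_of_nonneg (Finset.sum_nonneg fun m _ => hf m),
      Complex.norm_cpow_eq_rpow_re_of_pos ht0]
    have e3 : (-((σ : ℂ) + 1)).re = -σ - 1 := by simp; ring
    rw [e3]
    have hfl : (⌊t⌋₊ : ℝ) ≤ t := Nat.floor_le ht0.le
    have b1 : ∑ k ∈ Finset.Icc 1 ⌊t⌋₊, f k ≤ c1 * t + c2 * t ^ (1 / 2 : ℝ) := by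
      refine (hS _).trans ?_
      rw [← Real.sqrt_eq_rpow]
      gcongr
    refine (mul_le_mul_of_nonneg_right b1 (by positivity)).trans (le_of_eq ?_)
    simp only [Pi.add_apply]
    rw [add_mul, mul_assoc, mul_assoc, ← Real.rpow_add ht0]
    nth_rw 1 [← Real.rpow_one t]
    rw [← Real.rpow_add ht0]
    congr 3 <;> ring_nf

lemma chi_sq (D : ℕ) [NeZero D] : chi (D * D) = 1 := by
  refine MulChar.ext fun u => ?_
  rw [MulChar.one_apply_coe]
  have : ((u : ZMod (4 * (D * D))).val : ZMod (4 * (D * D))) = u := ZMod.natCast_zmod_val _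
  rw [← this, chi_apply]
  have hu : (u : ZMod (4 * (D * D))).val.Coprime (4 * (D * D)) := ZMod.val_coe_unit_coprime u
  have h0 := ne_zero_of_coprime hu
  rw [KR.mul_left] at h0 ⊢
  rcases tri D (u : ZMod (4 * (D * D))).val with h | h | h <;> rw [h] at h0 ⊢ <;> simp at h0 ⊢

lemma lseries_mono {u v : ℕ → ℝ} (hu : ∀ m, 0 ≤ u m) (huv : ∀ m, u m ≤ v m) {σ : ℝ}
    (hv : LSeriesSummable (fun m => (v m : ℂ)) σ) :
    ‖LSeries (fun m => (u m : ℂ)) σ‖ ≤ ‖LSeries (fun m => (v m : ℂ)) σ‖ := by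
  have hle : ∀ m, ‖LSeries.term (fun m => (u m : ℂ)) σ m‖ ≤ ‖LSeries.term (fun m => (v m : ℂ)) σ m‖ := by
    intro m
    refine LSeries.norm_term_le _ ?_
    rw [Complex.norm_of_nonneg (hu m), Complex.norm_of_nonneg ((hu m).trans (huv m))]
    exact huv m
  have hvn : Summable fun m => ‖LSeries.term (fun m => (v m : ℂ)) σ m‖ := hv.norm
  have hun : Summable fun m => ‖LSeries.term (fun m => (u m : ℂ)) σ m‖ :=
    Summable.of_nonneg_of_le (fun _ => norm_nonneg _) hle hvn
  have ev : ∀ m, LSeries.term (fun m => (v m : ℂ)) σ m = ((‖LSeries.term (fun m => (v m : ℂ)) σ m‖ : ℝ) : ℂ) := by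
    intro m
    have : 0 ≤ LSeries.term (fun m => (v m : ℂ)) σ m :=
      LSeries.term_nonneg (by exact_mod_cast (hu m).trans (huv m)) σ
    exact Complex.eq_coe_norm_of_nonneg this
  have e2 : LSeries (fun m => (v m : ℂ)) σ = ((∑' m, ‖LSeries.term (fun m => (v m : ℂ)) σ m‖ : ℝ) : ℂ) := by
    rw [LSeries, Complex.ofReal_tsum]
    exact tsum_congr ev
  rw [e2, Complex.norm_of_nonneg (tsum_nonneg fun _ => norm_nonneg _)]
  exact (norm_tsum_le_tsum_norm hun).trans (hun.tsum_le_tsum hle hvn)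

theorem L1_le_of_count {n D : ℕ} [NeZero D] (hD : ¬ IsSquare D) (hnD : D + 4 = n ^ 2) {c1 c2 : ℝ} (h1 : 0 ≤ c1) (h2 : 0 ≤ c2)
    (hS : ∀ N : ℕ, ∑ m ∈ Finset.Icc 1 N, (Rf n D m : ℝ) ≤ c1 * N + c2 * Real.sqrt N) :
    SG.L1 D * ∏ p ∈ (4 * (D * D)).primeFactors, (1 - 1 / (p : ℝ)) ≤ 2 * c1 := by
  have key : ∀ σ : ℝ, 1 < σ → ‖((σ : ℂ) - 1) * DirichletCharacter.LFunctionTrivChar (4 * (D * D)) σ *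
      DirichletCharacter.LFunction (chi D) σ‖ ≤ σ / (σ - 1 / 2) * (σ * (c1 + c2 * (σ - 1) / (σ - 1 / 2))) := by
    intro σ hσ
    have hσ' : 1 < (σ : ℂ).re := by simpa using hσ
    obtain ⟨s1, b1⟩ := lseries_le (f := fun m => (sqf m : ℝ)) (fun m => by exact_mod_cast sqf_nonneg m)
      le_rfl zero_le_one (fun N => by simpa using sqf_sum N) hσ
    obtain ⟨s2, b2⟩ := lseries_le (f := fun m => (Rf n D m : ℝ)) (fun m => by exact_mod_cast Rf_nonneg m)
      h1 h2 hS hσ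
    have s1' : LSeriesSummable (fun m => ((sqf : ArithmeticFunction ℤ) : ArithmeticFunction ℂ) m) σ := by
      convert s1 using 2 with m; simp
    have s2' : LSeriesSummable (fun m => ((Rf n D : ArithmeticFunction ℤ) : ArithmeticFunction ℂ) m) σ := by
      convert s2 using 2 with m; simp
    have s3 := LSeriesSummable_mul s1' s2'
    have e3 := LSeries_mul' s1' s2'
    have e4 := (LSeriesHasSum_mul (SG.hasSum_A (D * D) hσ') (SG.hasSum_A D hσ')).LSeries_eq
    rw [chi_sq] at e4
    rw [← intCoe_mul] at s3 e3 e4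
    have hm := lseries_mono (u := fun m => (((A (D * D) * A D) m : ℤ) : ℝ)) (v := fun m => (((sqf * Rf n D) m : ℤ) : ℝ)) (σ := σ)
      (fun m => by exact_mod_cast (conv_ineq hnD m).2) (fun m => by exact_mod_cast (conv_ineq hnD m).1)
      (by convert s3 using 2 with m; simp)
    simp only [Complex.ofReal_intCast] at hm b1 b2
    simp only [intCoe_apply] at e3 e4
    rw [e3, e4, norm_mul, norm_mul] at hm
    have hpos : 0 < σ - 1 := by linarith
    have hpos2 : 0 < σ - 1 / 2 := by linarith
    rw [norm_mul, norm_mul, show ((σ : ℂ) - 1) = ((σ - 1 : ℝ) : ℂ) by push_cast; rfl,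
      Complex.norm_of_nonneg hpos.le, mul_assoc]
    calc _ ≤ (σ - 1) * ((σ * (0 / (σ - 1) + 1 / (σ - 1 / 2))) * (σ * (c1 / (σ - 1) + c2 / (σ - 1 / 2)))) := by
          refine mul_le_mul_of_nonneg_left (hm.trans ?_) hpos.le
          exact mul_le_mul b1 b2 (norm_nonneg _) (by positivity)
      _ = _ := by field_simp; ring
  have t1 : Filter.Tendsto (fun σ : ℝ => ‖((σ : ℂ) - 1) * DirichletCharacter.LFunctionTrivChar (4 * (D * D)) σ *
      DirichletCharacter.LFunction (chi D) σ‖) (𝓝[>] 1)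
      (𝓝 ‖(∏ p ∈ (4 * (D * D)).primeFactors, (1 - (p : ℂ)⁻¹)) * DirichletCharacter.LFunction (chi D) 1‖) := by
    refine Filter.Tendsto.norm (Filter.Tendsto.mul ?_ ?_)
    · have hc : Filter.Tendsto (fun σ : ℝ => (σ : ℂ)) (𝓝[>] 1) (𝓝[≠] 1) := by
        refine tendsto_nhdsWithin_iff.2 ⟨?_, ?_⟩
        · have := (Complex.continuous_ofReal.tendsto 1).mono_left (nhdsWithin_le_nhds (s := Set.Ioi (1:ℝ)))
          simpa using this
        · filter_upwards [self_mem_nhdsWithin] with σ hσ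
          have : (1 : ℝ) < σ := hσ
          simp only [Set.mem_compl_iff, Set.mem_singleton_iff]
          exact_mod_cast this.ne'
      exact (DirichletCharacter.LFunctionTrivChar_residue_one (N := 4 * (D * D))).comp hc
    · have := ((DirichletCharacter.differentiable_LFunction (chi_ne_one hD)).continuous.comp Complex.continuous_ofReal).tendsto 1
      simpa [Function.comp_def] using this.mono_left (nhdsWithin_le_nhds (s := Set.Ioi (1:ℝ)))
  have t2 : Filter.Tendsto (fun σ : ℝ => σ / (σ - 1 / 2) * (σ * (c1 + c2 * (σ - 1) / (σ - 1 / 2)))) (𝓝[>] 1)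
      (𝓝 (1 / (1 - 1 / 2) * (1 * (c1 + c2 * (1 - 1) / (1 - 1 / 2))))) := by
    refine Filter.Tendsto.mono_left ?_ nhdsWithin_le_nhds
    refine ContinuousAt.tendsto (x := (1 : ℝ)) (f := fun σ : ℝ => σ / (σ - 1 / 2) * (σ * (c1 + c2 * (σ - 1) / (σ - 1 / 2)))) ?_
    fun_prop (disch := norm_num)
  have := le_of_tendsto_of_tendsto t1 t2 (by filter_upwards [self_mem_nhdsWithin] with σ hσ using key σ hσ)
  rw [SG.L1_eq D hD, show (∏ p ∈ (4 * (D * D)).primeFactors, (1 - (p : ℂ)⁻¹)) =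
    ((∏ p ∈ (4 * (D * D)).primeFactors, (1 - 1 / (p : ℝ)) : ℝ) : ℂ) by push_cast; simp, ← Complex.ofReal_mul] at this
  rw [Complex.norm_real] at this
  refine le_trans ?_ (this.trans (le_of_eq (by norm_num)))
  rw [mul_comm]
  exact le_abs_self _

end RT

end

section
open scoped nonZeroDivisors

namespace OQ

/-- the order `ℤ[ω]`, `ω² = nω - 1` -/
abbrev OO (n : ℕ) := QuadraticAlgebra ℤ (-1) (n : ℤ)

variable {n : ℕ}

lemma not_sq (hn : 3 ≤ n) (k : ℤ) : k ^ 2 ≠ (n : ℤ) ^ 2 - 4 := by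
  intro h
  have hn' : (3 : ℤ) ≤ n := by exact_mod_cast hn
  have h1 : |k| ^ 2 = (n : ℤ) ^ 2 - 4 := by rw [sq_abs, h]
  have h2 : |k| < n := by
    by_contra hc; push Not at hc; nlinarith
  have h3 : (n : ℤ) - 1 < |k| := by
    by_contra hc; push Not at hc; nlinarith [abs_nonneg k]
  omega

lemma norm_eq (z : OO n) : z.norm = z.re ^ 2 + n * z.re * z.im + z.im ^ 2 := by
  rw [QuadraticAlgebra.norm_def]; ring

lemma norm_zero_iff (hn : 3 ≤ n) (z : OO n) : z.norm = 0 ↔ z = 0 := by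
  refine ⟨fun h => ?_, fun h => by rw [h]; simp⟩
  rw [norm_eq] at h
  have h1 : (2 * z.re + n * z.im) ^ 2 = ((n : ℤ) ^ 2 - 4) * z.im ^ 2 := by linear_combination 4 * h
  have hy : z.im = 0 := by
    by_contra hy
    have hd : z.im ^ 2 ∣ (2 * z.re + n * z.im) ^ 2 := ⟨_, by rw [h1, mul_comm]⟩
    rw [Int.pow_dvd_pow_iff two_ne_zero] at hd
    obtain ⟨k, hk⟩ := hd
    rw [hk] at h1
    refine not_sq hn k ?_
    have : z.im ^ 2 * (k ^ 2 - (n ^ 2 - 4)) = 0 := by linear_combination h1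
    rcases mul_eq_zero.1 this with h | h
    · exact absurd (pow_eq_zero_iff two_ne_zero |>.1 h) hy
    · linarith
  rw [hy] at h
  have hx : z.re = 0 := by
    have : z.re ^ 2 = 0 := by linear_combination h
    exact pow_eq_zero_iff two_ne_zero |>.1 this
  ext <;> simp [hx, hy]

instance [h : Fact (3 ≤ n)] : IsDomain (OO n) := by
  have : NoZeroDivisors (OO n) := ⟨by
    intro a b hab
    rw [← norm_zero_iff h.out, map_mul, mul_eq_zero, norm_zero_iff h.out, norm_zero_iff h.out] at hab
    exact hab⟩
  exact NoZeroDivisors.to_isDomain _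

/-- `f(t) = t² - nt + 1` -/
def ff (n : ℕ) (t : ℤ) : ℤ := t ^ 2 - n * t + 1

/-- the ideal `(a, ω - t)` -/
def Id (n : ℕ) (a t : ℤ) (h : a ∣ ff n t) : Ideal (OO n) where
  carrier := {z | a ∣ z.re + t * z.im}
  add_mem' := by
    intro x y hx hy
    simp only [Set.mem_ofPred_eq, QuadraticAlgebra.re_add, QuadraticAlgebra.im_add] at *
    have := dvd_add hx hy
    rwa [show x.re + y.re + t * (x.im + y.im) = x.re + t * x.im + (y.re + t * y.im) by ring]
  zero_mem' := by simp
  smul_mem' := by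
    intro c x hx
    simp only [Set.mem_ofPred_eq, smul_eq_mul, QuadraticAlgebra.re_mul, QuadraticAlgebra.im_mul] at *
    obtain ⟨k, hk⟩ := h
    obtain ⟨l, hl⟩ := hx
    unfold ff at hk
    refine ⟨(c.re + t * c.im) * l - c.im * x.im * k, ?_⟩
    linear_combination (c.re + t * c.im) * hl - c.im * x.im * hk

lemma mem_Id {a t : ℤ} {h : a ∣ ff n t} {z : OO n} : z ∈ Id n a t h ↔ a ∣ z.re + t * z.im := Iff.rfl

lemma ff_conj (t : ℤ) : ff n (n - t) = ff n t := by unfold ff; ring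

lemma Id_mul_conj {a t : ℤ} (h : a ∣ ff n t) (hco : IsCoprime a (n - 2 * t)) :
    Id n a t h * Id n a (n - t) (by rwa [ff_conj]) = Ideal.span {(a : OO n)} := by
  apply le_antisymm
  · rw [Ideal.mul_le]
    rintro z ⟨k, hk⟩ w ⟨l, hl⟩
    obtain ⟨m, hm⟩ := h
    unfold ff at hm
    rw [Ideal.mem_span_singleton]
    have hz : z.re = a * k - t * z.im := by linarith
    have hw : w.re = a * l - (n - t) * w.im := by linarith
    refine ⟨⟨a * k * l - k * (n - t) * w.im - l * t * z.im - z.im * w.im * m + z.im * w.im * n * 0 + 0, k * w.im + l * z.im⟩, ?_⟩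
    ext
    · simp only [QuadraticAlgebra.re_mul, QuadraticAlgebra.re_intCast, QuadraticAlgebra.im_intCast, hz, hw, Int.cast_id]
      linear_combination (-z.im * w.im) * hm
    · simp only [QuadraticAlgebra.im_mul, QuadraticAlgebra.re_intCast, QuadraticAlgebra.im_intCast, hz, hw, Int.cast_id]
      ring
  · rw [Ideal.span_singleton_le_iff_mem]
    obtain ⟨p, q, hpq⟩ := hco
    have ha : ∀ s h, (a : OO n) ∈ Id n a s h := fun s h => by rw [mem_Id]; simp
    have hs : ∀ s h, (⟨-s, 1⟩ : OO n) ∈ Id n a s h := fun s h => by rw [mem_Id]; simp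
    have e : (a : OO n) = (p : OO n) * ((a : OO n) * (a : OO n)) + (q : OO n) * ((⟨-t, 1⟩ : OO n) * (a : OO n)
        - (a : OO n) * (⟨-(n - t), 1⟩ : OO n)) := by
      ext
      · simp
        linear_combination (-a) * hpq
      · simp
    rw [e]
    refine Ideal.add_mem _ (Ideal.mul_mem_left _ _ (Ideal.mul_mem_mul (ha _ _) (ha _ _)))
      (Ideal.mul_mem_left _ _ (Ideal.sub_mem _ (Ideal.mul_mem_mul (hs _ _) (ha _ _)) (Ideal.mul_mem_mul (ha _ _) (hs _ _))))

lemma Id_map_star {a t : ℤ} (h : a ∣ ff n t) :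
    (Id n a t h).map (starRingEnd (OO n)) = Id n a (n - t) (by rwa [ff_conj]) := by
  apply le_antisymm
  · rw [Ideal.map_le_iff_le_comap]
    intro z hz
    rw [Ideal.mem_comap, mem_Id]
    rw [mem_Id] at hz
    simp only [starRingEnd_apply, QuadraticAlgebra.re_star, QuadraticAlgebra.im_star]
    convert hz using 1; ring
  · intro z hz
    have : z = starRingEnd (OO n) (star z) := by rw [starRingEnd_apply, star_star]
    rw [this]
    refine Ideal.mem_map_of_mem _ ?_
    rw [mem_Id] at hz ⊢
    simp only [QuadraticAlgebra.re_star, QuadraticAlgebra.im_star]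
    convert hz using 1; ring

lemma Id_inj {a b : ℕ} {t s : ℕ} {ha : (a : ℤ) ∣ ff n t} {hb : (b : ℤ) ∣ ff n s} (hta : t < a) (hsb : s < b)
    (h : Id n a t ha = Id n b s hb) : a = b ∧ t = s := by
  have h1 : (b : ℤ) ∣ a := by
    have : ((a : ℤ) : OO n) ∈ Id n b s hb := by rw [← h, mem_Id]; simp
    simpa [mem_Id] using this
  have h2 : (a : ℤ) ∣ b := by
    have : ((b : ℤ) : OO n) ∈ Id n a t ha := by rw [h, mem_Id]; simp
    simpa [mem_Id] using this
  have hab : a = b := Nat.dvd_antisymm (by exact_mod_cast h2) (by exact_mod_cast h1)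
  subst hab
  refine ⟨rfl, ?_⟩
  have h3 : (a : ℤ) ∣ -t + s := by
    have : (⟨-t, 1⟩ : OO n) ∈ Id n a s hb := by rw [← h, mem_Id]; simp
    simpa [mem_Id] using this
  have h4 : |(-t + s : ℤ)| < a := by rw [abs_lt]; omega
  have := Int.eq_zero_of_abs_lt_dvd h3 h4
  omega

lemma Id_isUnit [Fact (3 ≤ n)] {a t : ℤ} (ha : a ≠ 0) (h : a ∣ ff n t) (hco : IsCoprime a (n - 2 * t)) :
    IsUnit ((Id n a t h : Ideal (OO n)) : FractionalIdeal (OO n)⁰ (FractionRing (OO n))) := by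
  have h1 := congrArg (fun I : Ideal (OO n) => (I : FractionalIdeal (OO n)⁰ (FractionRing (OO n)))) (Id_mul_conj h hco)
  simp only [FractionalIdeal.coeIdeal_mul, FractionalIdeal.coeIdeal_span_singleton] at h1
  refine isUnit_of_mul_isUnit_left (y := ((Id n a (n - t) (by rwa [ff_conj]) : Ideal (OO n)) : FractionalIdeal (OO n)⁰ (FractionRing (OO n)))) ?_
  rw [h1]
  have h0 : (algebraMap (OO n) (FractionRing (OO n))) (a : OO n) ≠ 0 := by
    simpa using ha
  refine IsUnit.of_mul_eq_one (FractionalIdeal.spanSingleton _ ((algebraMap (OO n) (FractionRing (OO n))) (a : OO n))⁻¹) ?_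
  rw [FractionalIdeal.spanSingleton_mul_spanSingleton, mul_inv_cancel₀ h0, FractionalIdeal.spanSingleton_one]

/-- the key consequence of equality of classes -/
lemma exists_alpha [Fact (3 ≤ n)] {a t a0 t0 : ℤ} (ha : a ≠ 0) (h : a ∣ ff n t) (hco : IsCoprime a (n - 2 * t))
    (ha0 : a0 ≠ 0) (h0 : a0 ∣ ff n t0) (hco0 : IsCoprime a0 (n - 2 * t0))
    (hcl : ClassGroup.mk (FractionRing (OO n)) (Id_isUnit ha0 h0 hco0).unit =
      ClassGroup.mk (FractionRing (OO n)) (Id_isUnit ha h hco).unit) :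
    ∃ α : OO n, α ≠ 0 ∧ Ideal.span {α} * Id n a0 t0 h0 = Ideal.span {(a0 : OO n)} * Id n a t h := by
  rw [ClassGroup.mk_eq_mk_of_coe_ideal (I' := Id n a0 t0 h0) (J' := Id n a t h) rfl rfl] at hcl
  obtain ⟨x, y, hx, hy, e⟩ := hcl
  have hm : x * (a0 : OO n) ∈ Ideal.span {y} * Id n a t h := by
    rw [← e]
    exact Ideal.mul_mem_mul (Ideal.mem_span_singleton_self x) (by rw [mem_Id]; simp)
  rw [Ideal.mem_span_singleton_mul] at hm
  obtain ⟨α, hα, e2⟩ := hm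
  refine ⟨α, ?_, ?_⟩
  · rintro rfl
    rw [mul_zero] at e2
    have : (a0 : OO n) ≠ 0 := by simpa using ha0
    exact mul_ne_zero hx this e2.symm
  · have : Ideal.span {y} * (Ideal.span {α} * Id n a0 t0 h0) = Ideal.span {y} * (Ideal.span {(a0 : OO n)} * Id n a t h) := by
      rw [← mul_assoc, Ideal.span_singleton_mul_span_singleton, e2, ← Ideal.span_singleton_mul_span_singleton,
        mul_comm (Ideal.span {x}), mul_assoc, e, mul_left_comm]
    rwa [Ideal.span_singleton_mul_right_inj hy] at this

lemma alpha_cong {a t a0 t0 : ℤ} (h : a ∣ ff n t) (h0 : a0 ∣ ff n t0) {α : OO n}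
    (e : Ideal.span {α} * Id n a0 t0 h0 = Ideal.span {(a0 : OO n)} * Id n a t h) :
    a0 ∣ α.re + (n - t0) * α.im := by
  have hm : α * (⟨-t0, 1⟩ : OO n) ∈ Ideal.span {(a0 : OO n)} * Id n a t h := by
    rw [← e]
    exact Ideal.mul_mem_mul (Ideal.mem_span_singleton_self _) (by rw [mem_Id]; simp)
  rw [Ideal.mem_span_singleton_mul] at hm
  obtain ⟨z, -, e2⟩ := hm
  have := congrArg QuadraticAlgebra.im e2
  simp at this
  exact ⟨z.im, by linear_combination -this⟩

lemma alpha_norm [Fact (3 ≤ n)] {a t a0 t0 : ℤ} (ha : a ≠ 0) (h : a ∣ ff n t) (hco : IsCoprime a (n - 2 * t))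
    (ha0 : a0 ≠ 0) (h0 : a0 ∣ ff n t0) (hco0 : IsCoprime a0 (n - 2 * t0)) {α : OO n}
    (e : Ideal.span {α} * Id n a0 t0 h0 = Ideal.span {(a0 : OO n)} * Id n a t h) :
    |α.norm| ≤ |a0 * a| := by
  have e2 := congrArg (Ideal.map (starRingEnd (OO n))) e
  rw [Ideal.map_mul, Ideal.map_mul, Id_map_star, Id_map_star, Ideal.map_span, Ideal.map_span, Set.image_singleton,
    Set.image_singleton, map_intCast] at e2
  have e3 : (Ideal.span {α} * Ideal.span {starRingEnd (OO n) α}) * (Id n a0 t0 h0 * Id n a0 (n - t0) (by rwa [ff_conj])) =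
     Ideal.span {(a0 : OO n)} * Ideal.span {(a0 : OO n)} * (Id n a t h * Id n a (n - t) (by rwa [ff_conj])) := by
    rw [mul_mul_mul_comm, e, e2, mul_mul_mul_comm]
  rw [Id_mul_conj h hco, Id_mul_conj h0 hco0] at e3
  simp only [Ideal.span_singleton_mul_span_singleton] at e3
  have e4 : α * starRingEnd (OO n) α = ((α.norm : ℤ) : OO n) := by
    rw [starRingEnd_apply, ← QuadraticAlgebra.algebraMap_norm_eq_mul_star]; rfl
  rw [e4] at e3
  have hd : ((α.norm : ℤ) : OO n) * a0 ∣ (a0 : OO n) * a0 * a := by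
    rw [← Ideal.mem_span_singleton, e3]; exact Ideal.mem_span_singleton_self _
  obtain ⟨z, hz⟩ := hd
  have := congrArg QuadraticAlgebra.re hz
  simp only [QuadraticAlgebra.re_mul, QuadraticAlgebra.im_mul, QuadraticAlgebra.re_intCast, QuadraticAlgebra.im_intCast, Int.cast_id,
    mul_zero, zero_mul, add_zero, zero_add] at this
  have h5 : a0 * a = α.norm * z.re := by
    apply mul_left_cancel₀ ha0; linear_combination this
  exact Int.le_of_dvd (abs_pos.2 (mul_ne_zero ha0 ha)) ((abs_dvd_abs _ _).2 ⟨_, h5⟩)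

end OQ

end

section
open scoped nonZeroDivisors QuadraticAlgebra

namespace OQ

variable {n : ℕ}

/-- the square root of the discriminant -/
noncomputable def rD (n : ℕ) : ℝ := Real.sqrt ((n : ℝ) ^ 2 - 4)
/-- the fundamental unit -/
noncomputable def ep (n : ℕ) : ℝ := (n + rD n) / 2
/-- its conjugate -/
noncomputable def ep' (n : ℕ) : ℝ := (n - rD n) / 2

lemma rD_sq (hn : 3 ≤ n) : rD n ^ 2 = (n : ℝ) ^ 2 - 4 := by
  have hn' : (3 : ℝ) ≤ n := by exact_mod_cast hn
  exact Real.sq_sqrt (by nlinarith)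

lemma rD_pos (hn : 3 ≤ n) : 0 < rD n := by
  have hn' : (3 : ℝ) ≤ n := by exact_mod_cast hn
  exact Real.sqrt_pos.2 (by nlinarith)

lemma ep_mul (hn : 3 ≤ n) : ep n * ep' n = 1 := by
  unfold ep ep'; linear_combination (-1 / 4) * rD_sq hn

lemma ep_gt (hn : 3 ≤ n) : 1 < ep n := by
  have hn' : (3 : ℝ) ≤ n := by exact_mod_cast hn
  unfold ep; linarith [rD_pos hn]

lemma ep_lt (hn : 3 ≤ n) : ep n < n := by
  have hn' : (3 : ℝ) ≤ n := by exact_mod_cast hn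
  have : rD n < n := by nlinarith [rD_pos hn, rD_sq hn]
  unfold ep; linarith

/-- embeddings -/
def eh (n : ℕ) (r : ℝ) (hr : r ^ 2 = n * r - 1) : OO n →+* ℝ where
  toFun z := z.re + z.im * r
  map_one' := by simp
  map_zero' := by simp
  map_add' x y := by simp; ring
  map_mul' x y := by
    simp only [QuadraticAlgebra.re_mul, QuadraticAlgebra.im_mul]
    push_cast
    linear_combination (-x.im * y.im : ℝ) * hr

/-- first embedding -/
noncomputable def e1 (hn : 3 ≤ n) : OO n →+* ℝ := eh n (ep n) (by
  unfold ep; linear_combination (1 / 4) * rD_sq hn)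
/-- second embedding -/
noncomputable def e2 (hn : 3 ≤ n) : OO n →+* ℝ := eh n (ep' n) (by
  unfold ep'; linear_combination (1 / 4) * rD_sq hn)

lemma e1_apply (hn : 3 ≤ n) (z : OO n) : e1 hn z = z.re + z.im * ep n := rfl
lemma e2_apply (hn : 3 ≤ n) (z : OO n) : e2 hn z = z.re + z.im * ep' n := rfl

lemma e_mul (hn : 3 ≤ n) (z : OO n) : e1 hn z * e2 hn z = z.norm := by
  rw [e1_apply, e2_apply, norm_eq]; push_cast
  have h1 := ep_mul hn
  have h2 : ep n + ep' n = n := by unfold ep ep'; ring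
  linear_combination (z.im ^ 2 : ℝ) * h1 + (z.re * z.im : ℝ) * h2

lemma e_sub (hn : 3 ≤ n) (z : OO n) : e1 hn z - e2 hn z = z.im * rD n := by
  rw [e1_apply, e2_apply]; unfold ep ep'; ring

/-- the unit `ω` -/
def W (n : ℕ) : (OO n)ˣ where
  val := ⟨0, 1⟩
  inv := ⟨n, -1⟩
  val_inv := by ext <;> simp
  inv_val := by ext <;> simp

lemma e1_W (hn : 3 ≤ n) (k : ℤ) : e1 hn ((W n ^ k : (OO n)ˣ) : OO n) = ep n ^ k := by
  have h := congrArg Units.val (map_zpow (Units.map (e1 hn).toMonoidHom) (W n) k)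
  rw [Units.val_zpow_eq_zpow_val] at h
  simp only [Units.coe_map] at h
  have : e1 hn (W n : OO n) = ep n := by simp [W, e1_apply]
  rw [← this]; exact h

lemma e2_W (hn : 3 ≤ n) (k : ℤ) : e2 hn ((W n ^ k : (OO n)ˣ) : OO n) = ep' n ^ k := by
  have h := congrArg Units.val (map_zpow (Units.map (e2 hn).toMonoidHom) (W n) k)
  rw [Units.val_zpow_eq_zpow_val] at h
  simp only [Units.coe_map] at h
  have : e2 hn (W n : OO n) = ep' n := by simp [W, e2_apply]
  rw [← this]; exact h

lemma normalise (hn : 3 ≤ n) {α : OO n} (hα : α ≠ 0) : ∃ u : (OO n)ˣ,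
    |e2 hn (α * u)| ≤ |e1 hn (α * u)| ∧ |e1 hn (α * u)| < ep n ^ 2 * |e2 hn (α * u)| ∧ 0 < |e2 hn (α * u)| := by
  have hN : (α.norm : ℝ) ≠ 0 := by exact_mod_cast fun h => hα ((norm_zero_iff hn α).1 h)
  rw [← e_mul hn] at hN
  have h1 : 0 < |e1 hn α| := abs_pos.2 (left_ne_zero_of_mul hN)
  have h2 : 0 < |e2 hn α| := abs_pos.2 (right_ne_zero_of_mul hN)
  have hp := ep_gt hn
  have hp0 : 0 < ep n := by linarith
  have hep' : ep' n = (ep n)⁻¹ := eq_inv_of_mul_eq_one_right (ep_mul hn)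
  obtain ⟨k, hk1, hk2⟩ := exists_mem_Ico_zpow (x := |e1 hn α| / |e2 hn α|) (y := ep n ^ 2) (div_pos h1 h2)
    (one_lt_pow₀ hp two_ne_zero)
  refine ⟨W n ^ (-k), ?_⟩
  rw [map_mul, map_mul, e1_W, e2_W, hep', abs_mul, abs_mul, abs_of_pos (zpow_pos hp0 _),
    abs_of_pos (zpow_pos (inv_pos.2 hp0) _)]
  rw [le_div_iff₀ h2] at hk1
  rw [div_lt_iff₀ h2, zpow_add_one₀ (by positivity)] at hk2
  have hE : (ep n ^ 2) ^ k = ep n ^ k * ep n ^ k := by rw [sq, mul_zpow]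
  rw [hE] at hk1 hk2
  have hk0 : 0 < ep n ^ k := zpow_pos hp0 _
  rw [inv_zpow, zpow_neg, inv_inv]
  refine ⟨?_, ?_, by positivity⟩
  · rw [← div_eq_mul_inv, le_div_iff₀ hk0]; linarith
  · rw [← div_eq_mul_inv, div_lt_iff₀ hk0]; linarith

lemma int_count {p q : ℝ} (h : p ≤ q) : ((Finset.Icc ⌈p⌉ ⌊q⌋).card : ℝ) ≤ q - p + 1 := by
  rw [Int.card_Icc]
  have h1 := Int.floor_le q
  have h2 := Int.le_ceil p
  rcases le_total 0 (⌊q⌋ + 1 - ⌈p⌉) with h0 | h0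
  · have : (((⌊q⌋ + 1 - ⌈p⌉).toNat : ℤ) : ℝ) = ((⌊q⌋ + 1 - ⌈p⌉ : ℤ) : ℝ) := by rw [Int.toNat_of_nonneg h0]
    push_cast at this
    rw [this]; linarith
  · rw [Int.toNat_of_nonpos h0]; push_cast; linarith

/-- valid pairs `(a,t)` -/
def IsP (n : ℕ) (p : ℕ × ℕ) : Prop :=
  p.2 < p.1 ∧ IsCoprime (p.1 : ℤ) (n - 2 * p.2) ∧ (p.1 : ℤ) ∣ ff n p.2

lemma IsP.ne {p : ℕ × ℕ} (h : IsP n p) : (p.1 : ℤ) ≠ 0 := by have := h.1; omega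

/-- class of a pair -/
noncomputable def cl [Fact (3 ≤ n)] (p : {p // IsP n p}) : ClassGroup (OO n) :=
  ClassGroup.mk (FractionRing (OO n)) (Id_isUnit p.2.ne p.2.2.2 p.2.2.1).unit

open Classical in
/-- all pairs with `a ≤ X` -/
noncomputable def SX (n X : ℕ) : Finset {p // IsP n p} :=
  Finset.subtype (IsP n) (Finset.Icc 1 X ×ˢ Finset.range X)

lemma mem_SX {X : ℕ} {p : {p // IsP n p}} : p ∈ SX n X ↔ p.1.1 ≤ X := by
  have := p.2.1
  simp [SX, Finset.mem_subtype]; omega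

lemma box [Fact (3 ≤ n)] (hn : 3 ≤ n) (p0 p : {p // IsP n p}) (h : cl p0 = cl p) {J : ℕ} (hJ : n ≤ 2 ^ J) {T : ℝ}
    (hT : (p0.1.1 : ℝ) * p.1.1 ≤ T) :
    ∃ α : OO n, (Ideal.span {α} * Id n p0.1.1 p0.1.2 p0.2.2.2 = Ideal.span {((p0.1.1 : ℤ) : OO n)} * Id n p.1.1 p.1.2 p.2.2.2) ∧
      ((p0.1.1 : ℤ) ∣ α.re + (n - p0.1.2) * α.im) ∧
      ∃ j < J, |(α.im : ℝ)| ≤ 2 * 2 ^ (j + 1) * Real.sqrt T / rD n ∧ |(α.re : ℝ) + α.im * ep' n| ≤ Real.sqrt T / 2 ^ j := by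
  obtain ⟨β, hβ0, hβ⟩ := exists_alpha p.2.ne p.2.2.2 p.2.2.1 p0.2.ne p0.2.2.2 p0.2.2.1 h
  obtain ⟨u, hu1, hu2, hu3⟩ := normalise hn hβ0
  rw [← Ideal.span_singleton_mul_right_unit u.isUnit] at hβ
  set α := β * u with hα
  refine ⟨α, hβ, alpha_cong _ _ hβ, ?_⟩
  have hN := alpha_norm p.2.ne p.2.2.2 p.2.2.1 p0.2.ne p0.2.2.2 p0.2.2.1 hβ
  have hN' : |e1 hn α| * |e2 hn α| ≤ T := by
    rw [← abs_mul, e_mul]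
    have : ((|α.norm| : ℤ) : ℝ) ≤ ((|(p0.1.1 : ℤ) * p.1.1| : ℤ) : ℝ) := by exact_mod_cast hN
    push_cast at this
    refine this.trans ((le_of_eq ?_).trans hT)
    rw [abs_of_nonneg (by positivity)]
  have hT0 : 0 ≤ T := le_trans (by positivity) hN'
  obtain ⟨j, hj1, hj2⟩ := exists_nat_pow_near (x := |e1 hn α| / |e2 hn α|) (y := (4 : ℝ)) ((one_le_div hu3).2 hu1) (by norm_num)
  rw [le_div_iff₀ hu3] at hj1
  rw [div_lt_iff₀ hu3] at hj2
  have hjJ : j < J := by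
    have h1 : (4 : ℝ) ^ j < ep n ^ 2 := lt_of_mul_lt_mul_right (hj1.trans_lt hu2) hu3.le
    have h2 : ep n ^ 2 ≤ (4 : ℝ) ^ J := by
      have h3 : ep n ≤ 2 ^ J := (ep_lt hn).le.trans (by exact_mod_cast hJ)
      have h4 := ep_gt hn
      calc ep n ^ 2 ≤ (2 ^ J) ^ 2 := by gcongr
        _ = 4 ^ J := by rw [← pow_mul, mul_comm, pow_mul]; norm_num
    exact (pow_lt_pow_iff_right₀ (by norm_num)).1 (h1.trans_le h2)
  have h44 : ∀ i : ℕ, (4 : ℝ) ^ i = (2 ^ i) ^ 2 := fun i => by rw [← pow_mul, mul_comm, pow_mul]; norm_num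
  have hs := Real.sq_sqrt hT0
  have hs0 := Real.sqrt_nonneg T
  have b1 : |e1 hn α| ≤ 2 ^ (j + 1) * Real.sqrt T := by
    refine abs_le_of_sq_le_sq' (b := 2 ^ (j + 1) * Real.sqrt T) ?_ (by positivity) |>.2
    rw [mul_pow, hs, ← h44]
    calc |e1 hn α| ^ 2 = |e1 hn α| * |e1 hn α| := sq _
      _ ≤ |e1 hn α| * (4 ^ (j + 1) * |e2 hn α|) := mul_le_mul_of_nonneg_left hj2.le (abs_nonneg _)
      _ = 4 ^ (j + 1) * (|e1 hn α| * |e2 hn α|) := by ring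
      _ ≤ _ := by gcongr
  have b2 : |e2 hn α| ≤ Real.sqrt T / 2 ^ j := by
    refine abs_le_of_sq_le_sq' (b := Real.sqrt T / 2 ^ j) ?_ (by positivity) |>.2
    rw [div_pow, hs, ← h44, le_div_iff₀ (by positivity)]
    calc |e2 hn α| ^ 2 * 4 ^ j = (4 ^ j * |e2 hn α|) * |e2 hn α| := by ring
      _ ≤ |e1 hn α| * |e2 hn α| := mul_le_mul_of_nonneg_right hj1 (abs_nonneg _)
      _ ≤ _ := hN'
  refine ⟨j, hjJ, ?_, by simpa [e2_apply] using b2⟩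
  rw [le_div_iff₀ (rD_pos hn)]
  calc |(α.im : ℝ)| * rD n = |e1 hn α - e2 hn α| := by rw [e_sub, abs_mul, abs_of_pos (rD_pos hn)]
    _ ≤ |e1 hn α| + |e2 hn α| := abs_sub _ _
    _ ≤ 2 * 2 ^ (j + 1) * Real.sqrt T := by linarith

lemma fiber_bound [Fact (3 ≤ n)] [DecidableEq (ClassGroup (OO n))] (hn : 3 ≤ n) {J : ℕ} (hJ : n ≤ 2 ^ J) (c : ClassGroup (OO n)) :
    ∃ c2 : ℝ, 0 ≤ c2 ∧ ∀ X : ℕ, (((SX n X).filter (fun p => cl p = c)).card : ℝ) ≤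
      16 * J / rD n * X + c2 * Real.sqrt X := by
  by_cases hc : ∃ p0 : {p // IsP n p}, cl p0 = c
  swap
  · refine ⟨0, le_rfl, fun X => ?_⟩
    rw [Finset.filter_false_of_mem fun p _ h => hc ⟨p, h⟩]
    have := rD_pos hn
    simp; positivity
  obtain ⟨p0, hp0⟩ := hc
  have hr := rD_pos hn
  have ha0 : (0 : ℝ) < p0.1.1 := by have := p0.2.1; exact_mod_cast (by omega : 0 < p0.1.1)
  set a0 : ℝ := ((p0.1.1 : ℕ) : ℝ) with ha0def
  set s0 := Real.sqrt a0 with hs0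
  have hs0p : 0 < s0 := Real.sqrt_pos.2 ha0
  refine ⟨∑ j ∈ Finset.range J, (2 * (2 * 2 ^ (j + 1) * s0 / rD n) + 2 * (s0 / 2 ^ j) / a0 + 1), by positivity, fun X => ?_⟩
  rcases Nat.eq_zero_or_pos X with rfl | hX
  · have : SX n 0 = ∅ := by
      ext p; rw [mem_SX]; have := p.2.1; simp; omega
    simp [this]
  set T : ℝ := X * a0 with hTdef
  have hsT : Real.sqrt T = Real.sqrt X * s0 := Real.sqrt_mul (by positivity) _
  set B : ℕ → ℝ := fun j => 2 * 2 ^ (j + 1) * Real.sqrt T / rD n with hB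
  set V : ℕ → ℝ := fun j => Real.sqrt T / 2 ^ j with hV
  have hB0 : ∀ j, 0 ≤ B j := fun j => by simp only [hB]; positivity
  have hV0 : ∀ j, 0 ≤ V j := fun j => by simp only [hV]; positivity
  -- x = a0 k - (n - t0) y ; |x + y ε'| ≤ V
  set cc : ℤ → ℝ := fun y => (n - p0.1.2 : ℝ) * y - y * ep' n with hcc
  let G : Finset (Σ _ : ℕ, Σ _ : ℤ, ℤ) := (Finset.range J).sigma fun j => (Finset.Icc ⌈-B j⌉ ⌊B j⌋).sigma fun y =>
    Finset.Icc ⌈(cc y - V j) / a0⌉ ⌊(cc y + V j) / a0⌋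
  have hG : (G.card : ℝ) ≤ ∑ j ∈ Finset.range J, (2 * B j + 1) * (2 * V j / a0 + 1) := by
    rw [Finset.card_sigma]; push_cast
    refine Finset.sum_le_sum fun j _ => ?_
    rw [Finset.card_sigma]; push_cast
    calc _ ≤ ∑ y ∈ Finset.Icc ⌈-B j⌉ ⌊B j⌋, (2 * V j / a0 + 1) := by
          refine Finset.sum_le_sum fun y _ => ?_
          refine (int_count ?_).trans (le_of_eq ?_)
          · have := hV0 j; gcongr; linarith
          · field_simp; ring
      _ = (Finset.Icc ⌈-B j⌉ ⌊B j⌋).card * (2 * V j / a0 + 1) := by rw [Finset.sum_const, nsmul_eq_mul]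
      _ ≤ _ := by
          have := hV0 j
          refine mul_le_mul_of_nonneg_right ?_ (by positivity)
          refine (int_count (by linarith [hB0 j])).trans (le_of_eq (by ring))
  have hcard : ((SX n X).filter (fun p => cl p = c)).card ≤ G.card := by
    refine Finset.card_le_card_of_forall_subsingleton (fun p q =>
      Ideal.span {(⟨p0.1.1 * q.2.2 - (n - p0.1.2) * q.2.1, q.2.1⟩ : OO n)} * Id n p0.1.1 p0.1.2 p0.2.2.2
        = Ideal.span {((p0.1.1 : ℤ) : OO n)} * Id n p.1.1 p.1.2 p.2.2.2) ?_ ?_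
    · intro p hp
      rw [Finset.mem_filter, mem_SX] at hp
      have hT : (p0.1.1 : ℝ) * p.1.1 ≤ T := by
        rw [hTdef, mul_comm]
        exact mul_le_mul_of_nonneg_right (by exact_mod_cast hp.1) ha0.le
      obtain ⟨α, h1, ⟨k, hk⟩, j, hj, h2, h3⟩ := box hn p0 p (hp0.trans hp.2.symm) hJ hT
      have hre : α.re = p0.1.1 * k - (n - p0.1.2) * α.im := by linarith
      refine ⟨⟨j, α.im, k⟩, ?_, ?_⟩
      · simp only [G, Finset.mem_sigma, Finset.mem_range, Finset.mem_Icc, Int.ceil_le, Int.le_floor]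
        rw [abs_le] at h2 h3
        rw [hre] at h3
        push_cast at h3
        refine ⟨hj, ⟨h2.1, h2.2⟩, ?_, ?_⟩
        · rw [div_le_iff₀ ha0]; simp only [hcc, hV]; linarith
        · rw [le_div_iff₀ ha0]; simp only [hcc, hV]; linarith
      · simp only
        rw [← hre]; exact h1
    · rintro q - p hp p' hp'
      have h1 := hp.2.symm.trans hp'.2
      have hne : ((p0.1.1 : ℤ) : OO n) ≠ 0 := by
        have := p0.2.ne
        simpa using this
      rw [Ideal.span_singleton_mul_right_inj hne] at h1
      have := Id_inj p.2.1 p'.2.1 h1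
      exact Subtype.ext (Prod.ext this.1 this.2)
  refine ((Nat.cast_le.2 hcard).trans hG).trans ?_
  rw [Finset.sum_mul]
  have e16 : 16 * J / rD n * X = ∑ j ∈ Finset.range J, 16 / rD n * X := by
    rw [Finset.sum_const, Finset.card_range, nsmul_eq_mul]; ring
  rw [e16, ← Finset.sum_add_distrib]
  refine Finset.sum_le_sum fun j _ => ?_
  have hX1 : 1 ≤ Real.sqrt X := by rw [Real.one_le_sqrt]; exact_mod_cast hX
  have hss : Real.sqrt X * Real.sqrt X = X := Real.mul_self_sqrt (by positivity)
  have hs00 : s0 * s0 = a0 := Real.mul_self_sqrt ha0.le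
  have hexp : (2 * B j + 1) * (2 * V j / a0 + 1) = 16 / rD n * X + (2 * (2 * 2 ^ (j + 1) * s0 / rD n) + 2 * (s0 / 2 ^ j) / a0) * Real.sqrt X + 1 := by
    simp only [hB, hV, hsT]
    have : (2 * 2 ^ (j + 1) * (Real.sqrt X * s0) / rD n) * (Real.sqrt X * s0 / 2 ^ j) = 4 * X * a0 / rD n := by
      have h4 : (2 * 2 ^ (j + 1) * (Real.sqrt X * s0) / rD n) * (Real.sqrt X * s0 / 2 ^ j) =
          4 * (Real.sqrt X * Real.sqrt X) * (s0 * s0) / rD n := by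
        rw [pow_succ]; field_simp; ring
      rw [h4, hss, hs00]
    have h2 : 2 * (2 * 2 ^ (j + 1) * (Real.sqrt X * s0) / rD n) * (2 * (Real.sqrt X * s0 / 2 ^ j) / a0) = 16 / rD n * X := by
      rw [show 2 * (2 * 2 ^ (j + 1) * (Real.sqrt X * s0) / rD n) * (2 * (Real.sqrt X * s0 / 2 ^ j) / a0) =
        4 * ((2 * 2 ^ (j + 1) * (Real.sqrt X * s0) / rD n) * (Real.sqrt X * s0 / 2 ^ j)) / a0 by ring, this]
      field_simp; ring
    linear_combination h2
  rw [hexp]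
  linarith

end OQ

end

section
namespace OQ

open KR RT

variable {n : ℕ}

lemma coprime_of {D a : ℕ} (hnD : D + 4 = n ^ 2) (hco : a.Coprime (4 * (D * D))) {t : ℤ} (ht : (a : ℤ) ∣ ff n t) :
    IsCoprime (a : ℤ) (n - 2 * t) := by
  have h1 : IsCoprime (a : ℤ) (D : ℤ) := by
    rw [Nat.isCoprime_iff_coprime]
    exact (Nat.Coprime.coprime_mul_left_right hco).coprime_mul_left_right
  obtain ⟨k, hk⟩ := ht
  unfold ff at hk
  have hD : (D : ℤ) = n ^ 2 - 4 := by
    have : (D : ℤ) + 4 = n ^ 2 := by exact_mod_cast hnD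
    linarith
  obtain ⟨p, q, hpq⟩ := h1
  refine ⟨p - 4 * q * k, q * (n - 2 * t), ?_⟩
  rw [hD] at hpq
  linear_combination hpq + 4 * q * hk

lemma Rf_sum_le {D : ℕ} (hnD : D + 4 = n ^ 2) (X : ℕ) :
    ∑ m ∈ Finset.Icc 1 X, (Rf n D m : ℝ) ≤ (SX n X).card := by
  classical
  have h1 : (SX n X).card = ∑ a ∈ Finset.Icc 1 X, ((Finset.range X).filter fun t => IsP n (a, t)).card := by
    unfold SX
    rw [Finset.card_subtype]
    rw [Finset.card_filter, Finset.sum_product]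
    exact Finset.sum_congr rfl fun a _ => by
      rw [Finset.card_filter]
  rw [h1]; push_cast
  refine Finset.sum_le_sum fun a ha => ?_
  rw [Finset.mem_Icc] at ha
  by_cases hco : a.Coprime (4 * (D * D))
  swap
  · rw [Rf_apply, eq_zero_of_not_coprime hco]; simp
  have h2 : Rf n D a ≤ rt n a := by
    rw [Rf_apply]
    rcases tri (D * D) a with h | h | h <;> rw [h] <;> simp
  have h3 : rt n a ≤ ((Finset.range X).filter fun t => IsP n (a, t)).card := by
    have : NeZero a := ⟨by omega⟩
    unfold rt
    rw [Nat.card_eq_fintype_card, ← Finset.card_univ]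
    refine Finset.card_le_card_of_injOn (fun t => t.1.val) ?_ ?_
    · intro t _
      have hlt := ZMod.val_lt t.1
      have hd : (a : ℤ) ∣ ff n (t.1.val : ℕ) := by
        rw [← ZMod.intCast_zmod_eq_zero_iff_dvd]
        have := t.2
        unfold ff
        push_cast
        rw [ZMod.natCast_zmod_val]
        exact this
      simp only [Finset.coe_filter, Finset.mem_range, Set.mem_ofPred_eq]
      exact ⟨by omega, hlt, coprime_of hnD hco hd, hd⟩
    · intro t _ s _ hts
      exact Subtype.ext (ZMod.val_injective a hts)
  exact_mod_cast h2.trans (by exact_mod_cast h3)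

lemma h_lower [Fact (3 ≤ n)] [Finite (ClassGroup (OO n))] (hn : 3 ≤ n) {D : ℕ} [NeZero D] (hD : ¬ IsSquare D)
    (hnD : D + 4 = n ^ 2) {J : ℕ} (hJ : n ≤ 2 ^ J) :
    SG.L1 D * ∏ p ∈ (4 * (D * D)).primeFactors, (1 - 1 / (p : ℝ)) ≤
      2 * (Nat.card (ClassGroup (OO n)) * (16 * J / rD n)) := by
  classical
  letI := Fintype.ofFinite (ClassGroup (OO n))
  choose c2 hc2 hb using fun c : ClassGroup (OO n) => fiber_bound hn hJ c
  have hr := rD_pos hn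
  refine L1_le_of_count hD hnD (c2 := ∑ c, c2 c) (by positivity) (Finset.sum_nonneg fun c _ => hc2 c) fun X => ?_
  refine (Rf_sum_le hnD X).trans ?_
  rw [Finset.card_eq_sum_card_fiberwise (f := cl) (t := Finset.univ) (fun _ _ => Finset.mem_univ _)]
  push_cast
  refine (Finset.sum_le_sum fun c _ => hb c X).trans (le_of_eq ?_)
  rw [Finset.sum_add_distrib, Finset.sum_const, Finset.card_univ, Nat.card_eq_fintype_card, Finset.sum_mul, nsmul_eq_mul]
  ring

theorem lower {δ : ℝ} (hδ : 0 < δ) : ∃ c : ℝ, 0 < c ∧ ∀ (n : ℕ) [Fact (3 ≤ n)] [Finite (ClassGroup (OO n))],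
    c * (n : ℝ) ^ (1 - 9 * δ) ≤ Nat.card (ClassGroup (OO n)) := by
  obtain ⟨c1, hc1, H1⟩ := SG.siegel hδ
  obtain ⟨c2, hc2, H2⟩ := DB.euler_bound hδ
  refine ⟨c1 * c2 / (64 * (2 / δ + 1)), by positivity, fun n hF hfin => ?_⟩
  have hn : 3 ≤ n := hF.out
  have hn' : (3 : ℝ) ≤ n := by exact_mod_cast hn
  have hn0 : (0 : ℝ) < n := by linarith
  have h4 : 4 ≤ n ^ 2 := by nlinarith
  obtain ⟨D, hD⟩ := Nat.exists_eq_add_of_le h4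
  have hnD : D + 4 = n ^ 2 := by omega
  have hD0 : D ≠ 0 := by rintro rfl; nlinarith
  have : NeZero D := ⟨hD0⟩
  have hsq : ¬ IsSquare D := by
    rintro ⟨k, hk⟩
    refine not_sq hn k ?_
    have : (D : ℤ) + 4 = n ^ 2 := by exact_mod_cast hnD
    rw [hk] at this; push_cast at this; linear_combination this
  set J := Nat.log 2 n + 1 with hJ
  have hJn : n ≤ 2 ^ J := (Nat.lt_pow_succ_log_self (by norm_num) n).le
  have key := h_lower hn hsq hnD hJn
  have hDr : (D : ℝ) ≤ (n : ℝ) ^ 2 := by exact_mod_cast (by omega : D ≤ n ^ 2)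
  have hDp : (0 : ℝ) < D := by exact_mod_cast Nat.pos_of_ne_zero hD0
  have b1 : c1 * (n : ℝ) ^ (-2 * δ) ≤ SG.L1 D := by
    refine le_trans ?_ (H1 D hsq)
    refine mul_le_mul_of_nonneg_left ?_ hc1.le
    have : (n : ℝ) ^ (-2 * δ) = ((n : ℝ) ^ 2) ^ (-δ) := by
      rw [← Real.rpow_natCast, ← Real.rpow_mul hn0.le]; congr 1; push_cast; ring
    rw [this]
    exact Real.rpow_le_rpow_of_nonpos hDp hDr (by linarith)
  have b2 : c2 * (n : ℝ) ^ (-6 * δ) ≤ ∏ p ∈ (4 * (D * D)).primeFactors, (1 - 1 / (p : ℝ)) := by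
    refine le_trans ?_ (H2 (4 * (D * D)) (by positivity))
    refine mul_le_mul_of_nonneg_left ?_ hc2.le
    have : (n : ℝ) ^ (-6 * δ) = ((n : ℝ) ^ 6) ^ (-δ) := by
      rw [← Real.rpow_natCast, ← Real.rpow_mul hn0.le]; congr 1; push_cast; ring
    rw [this]
    refine Real.rpow_le_rpow_of_nonpos (by positivity) ?_ (by linarith)
    push_cast
    calc (4 : ℝ) * (D * D) ≤ (n : ℝ) ^ 2 * ((n : ℝ) ^ 2 * (n : ℝ) ^ 2) := by
          gcongr; nlinarith
      _ = (n : ℝ) ^ 6 := by ring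
  have b3 : (J : ℝ) ≤ (2 / δ + 1) * (n : ℝ) ^ δ := by
    have h1 : ((2 : ℝ) ^ (Nat.log 2 n)) ≤ n := by exact_mod_cast Nat.pow_log_le_self 2 (by omega)
    have h2 : (Nat.log 2 n : ℝ) * Real.log 2 ≤ Real.log n := by
      rw [← Real.log_pow]; exact Real.log_le_log (by positivity) h1
    have h3 : (1 : ℝ) / 2 ≤ Real.log 2 := by linarith [Real.log_two_gt_d9]
    have h4 := Real.log_le_rpow_div hn0.le hδ
    have h5 : (1 : ℝ) ≤ (n : ℝ) ^ δ := Real.one_le_rpow (by linarith) hδ.le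
    have h6 : (Nat.log 2 n : ℝ) * (1 / 2) ≤ (Nat.log 2 n : ℝ) * Real.log 2 := by gcongr
    rw [hJ]; push_cast
    have : 2 / δ * (n : ℝ) ^ δ = 2 * ((n : ℝ) ^ δ / δ) := by ring
    linarith
  have hrn : (n : ℝ) / 2 ≤ rD n := by
    unfold rD
    apply Real.le_sqrt_of_sq_le; nlinarith
  have hr := rD_pos hn
  set h : ℝ := (Nat.card (ClassGroup (OO n)) : ℝ) with hh
  have hh0 : 0 ≤ h := by positivity
  have k1 : c1 * (n : ℝ) ^ (-2 * δ) * (c2 * (n : ℝ) ^ (-6 * δ)) ≤ 2 * (h * (16 * J / rD n)) := by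
    refine le_trans (mul_le_mul b1 b2 (by positivity) ?_) key
    exact le_trans (by positivity) b1
  have k2 : c1 * (n : ℝ) ^ (-2 * δ) * (c2 * (n : ℝ) ^ (-6 * δ)) * (n / 2) ≤ 32 * h * ((2 / δ + 1) * (n : ℝ) ^ δ) := by
    calc _ ≤ 2 * (h * (16 * J / rD n)) * rD n := by gcongr
      _ = 32 * h * J := by field_simp; ring
      _ ≤ _ := by gcongr
  have k3 : (n : ℝ) ^ (-2 * δ) * (n : ℝ) ^ (-6 * δ) * n = (n : ℝ) ^ (1 - 9 * δ) * (n : ℝ) ^ δ := by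
    nth_rw 3 [← Real.rpow_one (n : ℝ)]
    rw [← Real.rpow_add hn0, ← Real.rpow_add hn0, ← Real.rpow_add hn0]; congr 1; ring
  have hnδ : 0 < (n : ℝ) ^ δ := by positivity
  rw [div_mul_eq_mul_div, div_le_iff₀ (by positivity)]
  refine le_of_mul_le_mul_right ?_ hnδ
  have : c1 * c2 * (n : ℝ) ^ (1 - 9 * δ) * (n : ℝ) ^ δ = c1 * c2 * ((n : ℝ) ^ (-2 * δ) * (n : ℝ) ^ (-6 * δ) * n) := by
    rw [k3]; ring
  rw [this]
  linarith

end OQ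

end

section
open scoped nonZeroDivisors QuadraticAlgebra

namespace OQ

variable {n : ℕ}

lemma reduceJ (hn : 3 ≤ n) (J : Ideal (OO n)) {N : ℤ} (hN : 0 < N) (hNJ : (N : OO n) ∈ J)
    (hmin : ∀ z ∈ J, z ≠ 0 → N ^ 2 ≤ |z.norm|) :
    ∃ (g a k : ℤ) (h : a ∣ ff n k), 0 < g ∧ 0 < a ∧ 0 ≤ k ∧ k ≤ n ∧ ff n k ≠ 0 ∧ |ff n k| ≤ n ^ 2 ∧
      J = Ideal.span {(g : OO n)} * Id n a k h := by
  have hre : ∀ (c : ℤ), (c : OO n).re = c := fun c => rfl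
  have him : ∀ (c : ℤ), (c : OO n).im = 0 := fun c => rfl
  have hint : ∀ c : ℤ, (c : OO n) ∈ J → N ∣ c := by
    intro c hc
    have h1 : ((c % N : ℤ) : OO n) ∈ J := by
      have : ((c % N : ℤ) : OO n) = (c : OO n) - ((c / N : ℤ) : OO n) * (N : OO n) := by
        rw [Int.emod_def]; push_cast; ring
      rw [this]
      exact J.sub_mem hc (J.mul_mem_left _ hNJ)
    by_contra hd
    have h2 : c % N ≠ 0 := fun h => hd (Int.dvd_of_emod_eq_zero h)
    have h3 := hmin _ h1 (by exact_mod_cast h2)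
    rw [QuadraticAlgebra.norm_intCast, abs_of_nonneg (sq_nonneg _)] at h3
    have h4 := Int.emod_nonneg c hN.ne'
    have h5 := Int.emod_lt_of_pos c hN
    rw [Int.cast_id] at h3
    nlinarith
  let M : Ideal ℤ :=
    { carrier := {y | ∃ z ∈ J, z.im = y}
      add_mem' := by
        rintro _ _ ⟨z, hz, rfl⟩ ⟨w, hw, rfl⟩
        exact ⟨z + w, J.add_mem hz hw, by simp⟩
      zero_mem' := ⟨0, J.zero_mem, by simp⟩
      smul_mem' := by
        rintro c _ ⟨z, hz, rfl⟩
        exact ⟨(c : OO n) * z, J.mul_mem_left _ hz, by simp⟩ }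
  obtain ⟨g', hg'⟩ := (IsPrincipalIdealRing.principal M).principal
  have hg0 : M = Ideal.span {((g'.natAbs : ℕ) : ℤ)} := by rw [Int.span_natAbs]; exact hg'
  set g : ℤ := ((g'.natAbs : ℕ) : ℤ) with hg
  have hNM : N ∈ M := ⟨(N : OO n) * ⟨0, 1⟩, J.mul_mem_right _ hNJ, by simp⟩
  have hdvd : ∀ y ∈ M, g ∣ y := fun y hy => by rw [hg0, Ideal.mem_span_singleton] at hy; exact hy
  have hgpos : 0 < g := by
    have h1 := hdvd N hNM
    have h2 : g ≠ 0 := by rintro h; rw [h, zero_dvd_iff] at h1; omega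
    omega
  have hgM : g ∈ M := by rw [hg0]; exact Ideal.mem_span_singleton_self _
  obtain ⟨z0, hz0, hz0g⟩ := hgM
  have hdi : ∀ z ∈ J, g ∣ z.im := fun z hz => hdvd _ ⟨z, hz, rfl⟩
  have hdr : ∀ z ∈ J, g ∣ z.re := by
    intro z hz
    have h1 := hdi _ (J.mul_mem_left (⟨0, 1⟩ : OO n) hz)
    simp at h1
    have h2 := hdi z hz
    exact (Int.dvd_add_left (h2.mul_left _)).1 h1
  obtain ⟨b, hb⟩ := hdr z0 hz0
  obtain ⟨a, ha⟩ := hdr _ hNJ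
  rw [hre] at ha
  have hapos : 0 < a := by
    by_contra h; push Not at h; nlinarith
  obtain ⟨q, hq⟩ : ∃ q : ℤ, q = (n - a + 1) / 2 := ⟨_, rfl⟩
  obtain ⟨k, hk⟩ : ∃ k : ℤ, k = q + (-b - q) % a := ⟨_, rfl⟩
  obtain ⟨m, hm⟩ : ∃ m : ℤ, k = -b + a * m := ⟨-((-b - q) / a), by rw [hk, Int.emod_def]; ring⟩
  have hr1 := Int.emod_nonneg (-b - q) hapos.ne'
  have hr2 := Int.emod_lt_of_pos (-b - q) hapos
  have hk1 : (n : ℤ) - a ≤ 2 * k := by omega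
  have hk2 : 2 * k ≤ n + a := by omega
  obtain ⟨z1, hz1⟩ : ∃ z1 : OO n, z1 = ⟨-(g * k), g⟩ := ⟨_, rfl⟩
  have hz1J : z1 ∈ J := by
    have : z1 = z0 - (m : OO n) * (N : OO n) := by
      rw [hz1]
      ext
      · simp [hb, ha, hm]; ring
      · simp [hz0g]
    rw [this]
    exact J.sub_mem hz0 (J.mul_mem_left _ hNJ)
  have hf : a ∣ ff n k := by
    have h1 : ((g * ff n k : ℤ) : OO n) ∈ J := by
      have : ((g * ff n k : ℤ) : OO n) = z1 * ⟨n - k, -1⟩ := by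
        rw [hz1]; unfold ff
        ext
        · rw [hre]; simp; ring
        · rw [him]; simp; ring
      rw [this]
      exact J.mul_mem_right _ hz1J
    have h2 := hint _ h1
    rw [ha] at h2
    exact Int.dvd_of_mul_dvd_mul_left hgpos.ne' h2
  have hz1n : z1.norm = g ^ 2 * ff n k := by
    rw [norm_eq, hz1]; unfold ff; simp only; ring
  have hbig : a ^ 2 ≤ |ff n k| := by
    have h1 := hmin z1 hz1J (by
      intro h
      have := congrArg QuadraticAlgebra.im h
      rw [hz1] at this; simp at this; omega)
    rw [hz1n, abs_mul, abs_of_nonneg (sq_nonneg g), ha, mul_pow] at h1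
    exact le_of_mul_le_mul_left h1 (by positivity)
  have hff : 4 * ff n k = (2 * k - n) ^ 2 - (n ^ 2 - 4) := by unfold ff; ring
  have hlin : (2 * k - n) ^ 2 ≤ a ^ 2 := sq_le_sq' (by linarith) (by linarith)
  have hneg : ff n k < 0 := by
    by_contra h; push Not at h
    rw [abs_of_nonneg h] at hbig
    have hn' : (3 : ℤ) ≤ n := by exact_mod_cast hn
    nlinarith
  rw [abs_of_neg hneg] at hbig
  have han : 2 * a < n := by
    by_contra h; push Not at h; nlinarith [sq_nonneg (2 * k - n : ℤ)]
  refine ⟨g, a, k, hf, hgpos, hapos, by omega, by omega, hneg.ne, by rw [abs_of_neg hneg]; nlinarith [sq_nonneg (2 * k - n : ℤ)], ?_⟩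
  apply le_antisymm
  · intro z hz
    obtain ⟨r, hr⟩ := hdr z hz
    obtain ⟨l, hl⟩ := hdi z hz
    rw [Ideal.mem_span_singleton_mul]
    refine ⟨⟨r, l⟩, ?_, ?_⟩
    · rw [mem_Id]
      have h1 : ((g * (r + k * l) : ℤ) : OO n) ∈ J := by
        have : ((g * (r + k * l) : ℤ) : OO n) = z - (l : OO n) * z1 := by
          rw [hz1]
          ext
          · rw [hre]; simp [hr]; ring
          · rw [him]; simp [hl]; ring
        rw [this]
        exact J.sub_mem hz (J.mul_mem_left _ hz1J)
      have h2 := hint _ h1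
      rw [ha] at h2
      exact Int.dvd_of_mul_dvd_mul_left hgpos.ne' h2
    · ext
      · simp [hr]
      · simp [hl]
  · intro z hz
    rw [Ideal.mem_span_singleton_mul] at hz
    obtain ⟨w, ⟨c, hc⟩, rfl⟩ := hz
    have : (g : OO n) * w = (w.im : OO n) * z1 + (c : OO n) * (N : OO n) := by
      rw [hz1]
      ext
      · simp [ha]; linear_combination g * hc
      · simp; ring
    rw [this]
    exact J.add_mem (J.mul_mem_left _ hz1J) (J.mul_mem_left _ hNJ)

lemma reduce (hn : 3 ≤ n) (I : Ideal (OO n)) (hI : I ≠ ⊥) :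
    ∃ (β : OO n) (g a k : ℤ) (h : a ∣ ff n k), β ≠ 0 ∧ 0 < g ∧ 0 < a ∧ 0 ≤ k ∧ k ≤ n ∧ ff n k ≠ 0 ∧ |ff n k| ≤ n ^ 2 ∧
      Ideal.span {β} * I = Ideal.span {(g : OO n)} * Id n a k h := by
  have : Fact (3 ≤ n) := ⟨hn⟩
  obtain ⟨α0, hα0, hα00⟩ := Submodule.exists_mem_ne_zero_of_ne_bot hI
  have hex : ∃ m : ℕ, ∃ α ∈ I, α ≠ 0 ∧ α.norm.natAbs = m := ⟨_, α0, hα0, hα00, rfl⟩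
  classical
  obtain ⟨α, hα, hα0', hαm⟩ := Nat.find_spec hex
  have hmin : ∀ z ∈ I, z ≠ 0 → |α.norm| ≤ |z.norm| := by
    intro z hz hz0
    have := Nat.find_min' hex ⟨z, hz, hz0, rfl⟩
    rw [Int.abs_eq_natAbs, Int.abs_eq_natAbs]
    omega
  have hN0 : α.norm ≠ 0 := fun h => hα0' ((norm_zero_iff hn α).1 h)
  have hs0 : star α ≠ 0 := by
    intro h
    apply hN0
    rw [← QuadraticAlgebra.norm_star, h, QuadraticAlgebra.norm_zero]
  have hmem : ((|α.norm| : ℤ) : OO n) ∈ Ideal.span {star α} * I := by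
    have e4 : star α * α = ((α.norm : ℤ) : OO n) := by
      rw [mul_comm, ← QuadraticAlgebra.algebraMap_norm_eq_mul_star]; rfl
    have h1 : ((α.norm : ℤ) : OO n) ∈ Ideal.span {star α} * I := by
      rw [← e4]; exact Ideal.mul_mem_mul (Ideal.mem_span_singleton_self _) hα
    rcases abs_choice α.norm with h | h <;> rw [h]
    · exact h1
    · push_cast; exact neg_mem h1
  obtain ⟨g, a, k, h, h1, h2, h3, h4, h5, h6, h7⟩ := reduceJ hn (Ideal.span {star α} * I) (abs_pos.2 hN0) hmem (by
    intro z hz hz0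
    rw [Ideal.mem_span_singleton_mul] at hz
    obtain ⟨w, hw, rfl⟩ := hz
    rw [map_mul, QuadraticAlgebra.norm_star, abs_mul, sq]
    exact mul_le_mul_of_nonneg_left (hmin w hw (right_ne_zero_of_mul hz0)) (abs_nonneg _))
  exact ⟨star α, g, a, k, h, hs0, h1, h2, h3, h4, h5, h6, h7⟩

end OQ

end

section
open scoped nonZeroDivisors QuadraticAlgebra

namespace OQ

variable {n : ℕ}

lemma class_rep [Fact (3 ≤ n)] (c : ClassGroup (OO n)) :
    ∃ (a k : ℤ) (h : a ∣ ff n k) (u : (FractionalIdeal (OO n)⁰ (FractionRing (OO n)))ˣ),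
      0 < a ∧ 0 ≤ k ∧ k ≤ n ∧ ff n k ≠ 0 ∧ |ff n k| ≤ n ^ 2 ∧
      (u : FractionalIdeal (OO n)⁰ (FractionRing (OO n))) = (Id n a k h : FractionalIdeal (OO n)⁰ (FractionRing (OO n))) ∧ ClassGroup.mk (FractionRing (OO n)) u = c := by
  have hn : 3 ≤ n := Fact.out
  refine ClassGroup.induction (FractionRing (OO n)) (fun v => ?_) c
  set I : Ideal (OO n) := (v : FractionalIdeal (OO n)⁰ (FractionRing (OO n))).num with hI
  set d := (v : FractionalIdeal (OO n)⁰ (FractionRing (OO n))).den with hd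
  have hd0 : algebraMap (OO n) (FractionRing (OO n)) d ≠ 0 := by
    simp
  have hI1 : (I : FractionalIdeal (OO n)⁰ (FractionRing (OO n))) =
      FractionalIdeal.spanSingleton (OO n)⁰ (algebraMap (OO n) (FractionRing (OO n)) d) * v :=
    (FractionalIdeal.den_mul_self_eq_num' (OO n)⁰ (FractionRing (OO n)) _).symm
  have hI0 : I ≠ ⊥ := by
    intro h
    rw [h] at hI1
    have : (FractionalIdeal.spanSingleton (OO n)⁰ (algebraMap (OO n) (FractionRing (OO n)) d) * (v : FractionalIdeal (OO n)⁰ (FractionRing (OO n)))) ≠ 0 :=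
      fun h0 => (FractionalIdeal.spanSingleton_ne_zero_iff.2 hd0) (v.isUnit.mul_left_eq_zero.1 h0)
    apply this
    rw [← hI1]; simp
  obtain ⟨β, g, a, k, h, hβ, hg, ha, hk0, hk1, hf, hf2, heq⟩ := reduce hn I hI0
  have hgO : (g : OO n) ≠ 0 := by exact_mod_cast hg.ne'
  have hunit : ∀ x : OO n, x ≠ 0 → IsUnit (FractionalIdeal.spanSingleton (OO n)⁰ (algebraMap (OO n) (FractionRing (OO n)) x)) := by
    intro x hx
    have hx' : algebraMap (OO n) (FractionRing (OO n)) x ≠ 0 := by simpa using hx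
    exact ⟨toPrincipalIdeal (OO n) (FractionRing (OO n)) (Units.mk0 _ hx'), by simp⟩
  have hIu : IsUnit (I : FractionalIdeal (OO n)⁰ (FractionRing (OO n))) := by
    rw [hI1]
    exact (hunit _ (nonZeroDivisors.ne_zero d.2)).mul v.isUnit
  have heq' := congrArg (fun J : Ideal (OO n) => (J : FractionalIdeal (OO n)⁰ (FractionRing (OO n)))) heq
  simp only [FractionalIdeal.coeIdeal_mul, FractionalIdeal.coeIdeal_span_singleton] at heq'
  have hJu : IsUnit (Id n a k h : FractionalIdeal (OO n)⁰ (FractionRing (OO n))) := by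
    refine isUnit_of_mul_isUnit_right (x := FractionalIdeal.spanSingleton (OO n)⁰ (algebraMap (OO n) (FractionRing (OO n)) (g : OO n))) ?_
    rw [← heq']
    exact (hunit _ hβ).mul hIu
  obtain ⟨u, hu⟩ := hJu
  obtain ⟨w, hw⟩ := hIu
  refine ⟨a, k, h, u, ha, hk0, hk1, hf, hf2, hu, ?_⟩
  have h1 : ClassGroup.mk (FractionRing (OO n)) u = ClassGroup.mk (FractionRing (OO n)) w :=
    (ClassGroup.mk_eq_mk_of_coe_ideal hu hw).2 ⟨(g : OO n), β, hgO, hβ, heq.symm⟩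
  rw [h1, eq_comm]
  rw [ClassGroup.mk_eq_mk]
  refine ⟨Units.mk0 _ hd0, ?_⟩
  ext1
  rw [Units.val_mul, coe_toPrincipalIdeal, hw, hI1, mul_comm]
  rfl

lemma upper {δ : ℝ} (hδ : 0 < δ) :
    ∃ C : ℝ, 1 ≤ C ∧ ∀ (n : ℕ) [Fact (3 ≤ n)], Finite (ClassGroup (OO n)) ∧
      (Nat.card (ClassGroup (OO n)) : ℝ) ≤ C * (n : ℝ) ^ (1 + 2 * δ) := by
  obtain ⟨C, hC1, hC⟩ := DB.divisor_bound hδ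
  refine ⟨2 * C, by linarith, fun n hnf => ?_⟩
  have hn : 3 ≤ n := Fact.out
  choose a k h u ha hk0 hk1 hf hf2 hu hc using class_rep (n := n)
  let S : Finset ((_ : ℕ) × ℕ) := (Finset.range (n + 1)).sigma (fun k => (ff n k).natAbs.divisors)
  let φ : ClassGroup (OO n) → S := fun c => ⟨⟨(k c).toNat, (a c).toNat⟩, by
    have h1 : (((k c).toNat : ℕ) : ℤ) = k c := Int.toNat_of_nonneg (hk0 c)
    have h2 : (((a c).toNat : ℕ) : ℤ) = a c := Int.toNat_of_nonneg (ha c).le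
    rw [Finset.mem_sigma]
    refine ⟨?_, ?_⟩
    · rw [Finset.mem_range]
      have := hk1 c
      simp only
      omega
    · rw [Nat.mem_divisors]
      simp only [h1]
      refine ⟨?_, by simpa using hf c⟩
      rw [← Int.natCast_dvd, h2]
      exact h c⟩
  have hφ : Function.Injective φ := by
    intro c c' hcc
    have h1 : (k c).toNat = (k c').toNat := congrArg (fun x : S => x.1.1) hcc
    have h2 : (a c).toNat = (a c').toNat := congrArg (fun x : S => x.1.2) hcc
    have h3 : k c = k c' := by have := hk0 c; have := hk0 c'; omega
    have h4 : a c = a c' := by have := ha c; have := ha c'; omega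
    rw [← hc c, ← hc c']
    congr 1
    ext1
    rw [hu, hu]
    congr 1
    ext z
    rw [mem_Id, mem_Id, h3, h4]
  refine ⟨Finite.of_injective φ hφ, ?_⟩
  have hcard : Nat.card (ClassGroup (OO n)) ≤ S.card := by
    have := Nat.card_le_card_of_injective φ hφ
    simpa using this
  have hn0 : (0 : ℝ) < n := by exact_mod_cast (by omega : 0 < n)
  have hS : (S.card : ℝ) ≤ ∑ k ∈ Finset.range (n + 1), C * (n : ℝ) ^ (2 * δ) := by
    rw [Finset.card_sigma]
    push_cast
    refine Finset.sum_le_sum fun k hk => ?_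
    rw [Finset.mem_range] at hk
    have hkn : (k : ℤ) ≤ n := by omega
    have hk0 : (0 : ℤ) ≤ k := by omega
    have hn3 : (3 : ℤ) ≤ n := by exact_mod_cast hn
    have hne : (ff n k) ≠ 0 := by
      intro h0
      unfold ff at h0
      exact not_sq hn (2 * k - n) (by linear_combination 4 * h0)
    refine (hC _ (by simpa using hne)).trans ?_
    have hle : |ff n k| ≤ n ^ 2 := by
      unfold ff
      rw [abs_le]; constructor <;> nlinarith
    have hle' : ((ff n k).natAbs : ℝ) ≤ (n : ℝ) ^ 2 := by
      rw [Int.abs_eq_natAbs] at hle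
      exact_mod_cast hle
    have h5 : ((ff n k).natAbs : ℝ) ^ δ ≤ (n : ℝ) ^ (2 * δ) := by
      rw [Real.rpow_mul hn0.le, Real.rpow_two]
      exact Real.rpow_le_rpow (by positivity) hle' hδ.le
    exact mul_le_mul_of_nonneg_left h5 (by linarith)
  rw [Finset.sum_const, Finset.card_range, nsmul_eq_mul] at hS
  have h6 : (Nat.card (ClassGroup (OO n)) : ℝ) ≤ S.card := by exact_mod_cast hcard
  refine (h6.trans hS).trans ?_
  rw [Real.rpow_add hn0, Real.rpow_one]
  have h7 : ((n + 1 : ℕ) : ℝ) ≤ 2 * n := by push_cast; have : (3 : ℝ) ≤ n := by exact_mod_cast hn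
                                            linarith
  have h8 : 0 ≤ C * (n : ℝ) ^ (2 * δ) := mul_nonneg (by linarith) (by positivity)
  nlinarith [mul_le_mul_of_nonneg_right h7 h8]

end OQ

end

namespace OQ

variable {n : ℕ}

/-- the image of `ω` in `ℂ` -/
def om (n : ℕ) : ℂ := ((n : ℂ) + sqrtD ((n : ℤ) ^ 2 - 4)) / 2

lemma sqrtD_sq (hn : 3 ≤ n) : sqrtD ((n : ℤ) ^ 2 - 4) ^ 2 = (n : ℂ) ^ 2 - 4 := by
  have hn' : (3 : ℤ) ≤ n := by exact_mod_cast hn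
  have h0 : 0 ≤ (n : ℤ) ^ 2 - 4 := by nlinarith
  unfold sqrtD
  rw [if_pos h0, ← Complex.ofReal_pow, Real.sq_sqrt (by exact_mod_cast h0)]
  push_cast
  ring

lemma om_sq (hn : 3 ≤ n) : om n * om n = (-1 : ℤ) • (1 : ℂ) + (n : ℤ) • om n := by
  have := sqrtD_sq hn
  unfold om
  simp only [zsmul_eq_mul]
  push_cast
  linear_combination this / 4

/-- embedding of the order in `ℂ` -/
def emb (hn : 3 ≤ n) : OO n →ₐ[ℤ] ℂ := QuadraticAlgebra.lift ⟨om n, om_sq hn⟩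

lemma emb_apply (hn : 3 ≤ n) (z : OO n) : emb hn z = z.re + z.im * om n := by
  unfold emb
  simp [QuadraticAlgebra.lift]

lemma emb_inj (hn : 3 ≤ n) : Function.Injective (emb hn) := by
  rw [injective_iff_map_eq_zero]
  intro z hz
  rw [← norm_zero_iff hn]
  have h1 : emb hn (algebraMap ℤ (OO n) z.norm) = 0 := by
    rw [QuadraticAlgebra.algebraMap_norm_eq_mul_star, map_mul, hz, zero_mul]
  rw [AlgHom.commutes] at h1
  simpa using h1

lemma omegaD_eq (n : ℕ) : ∃ j : ℤ, omegaD ((n : ℤ) ^ 2 - 4) = om n + j := by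
  obtain ⟨j, hj⟩ : ∃ j : ℤ, (n : ℤ) ^ 2 - 4 - n = 2 * j := by
    obtain ⟨j, hj⟩ := Int.even_mul_pred_self (n : ℤ)
    exact ⟨j - 2, by linear_combination hj⟩
  refine ⟨j, ?_⟩
  have hj' : (n : ℂ) ^ 2 - 4 - n = 2 * j := by exact_mod_cast hj
  unfold omegaD om
  push_cast
  linear_combination hj' / 2

lemma range_emb (hn : 3 ≤ n) : (emb hn).toRingHom.range = QOrder ((n : ℤ) ^ 2 - 4) := by
  obtain ⟨j, hj⟩ := omegaD_eq n
  unfold QOrder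
  apply le_antisymm
  · rintro _ ⟨z, rfl⟩
    have hom : om n ∈ Subring.closure {omegaD ((n : ℤ) ^ 2 - 4)} := by
      have : om n = omegaD ((n : ℤ) ^ 2 - 4) - (j : ℂ) := by rw [hj]; ring
      rw [this]
      exact sub_mem (Subring.subset_closure rfl) (intCast_mem _ j)
    change emb hn z ∈ _
    rw [emb_apply]
    exact add_mem (intCast_mem _ _) (mul_mem (intCast_mem _ _) hom)
  · rw [Subring.closure_le]
    rintro _ rfl
    refine ⟨⟨j, 1⟩, ?_⟩
    change emb hn _ = _
    rw [emb_apply, hj]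
    push_cast
    ring

lemma classNumber_eq [Fact (3 ≤ n)] (hn : 3 ≤ n) :
    classNumber ((n : ℤ) ^ 2 - 4) = Nat.card (ClassGroup (OO n)) := by
  unfold classNumber
  have e : OO n ≃+* (emb hn).toRingHom.range := RingEquiv.ofBijective (emb hn).toRingHom.rangeRestrict
    ⟨fun x y h => emb_inj hn (congrArg Subtype.val h), (emb hn).toRingHom.rangeRestrict_surjective⟩
  have e' : OO n ≃+* QOrder ((n : ℤ) ^ 2 - 4) := e.trans (RingEquiv.subringCongr (range_emb hn))
  exact (Nat.card_congr (ClassGroup.mulEquiv e').toEquiv).symm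

end OQ

/-- For `Δ⁺ₙ = n² - 4`, `log h(Δ⁺ₙ) = log n + o(log n)` as `n → ∞`. -/
theorem log_classNumber_sub_asymptotic :
    Filter.Tendsto
      (fun n : ℕ =>
        (Real.log (classNumber ((n : ℤ) ^ 2 - 4)) - Real.log n) / Real.log n)
      Filter.atTop (nhds 0) := by
  rw [Metric.tendsto_atTop]
  intro ε hε
  obtain ⟨δ, hδ, hδε⟩ : ∃ δ : ℝ, 0 < δ ∧ 18 * δ = ε := ⟨ε / 18, by positivity, by ring⟩
  obtain ⟨c, hc, hlow⟩ := OQ.lower hδ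
  obtain ⟨C, hC, hup⟩ := OQ.upper hδ
  have hlog : Filter.Tendsto (fun n : ℕ => Real.log n) Filter.atTop Filter.atTop :=
    Real.tendsto_log_atTop.comp tendsto_natCast_atTop_atTop
  have hev : ∀ᶠ n : ℕ in Filter.atTop, 3 ≤ n ∧
      (|Real.log c| + |Real.log C| + 1) / (9 * δ) ≤ Real.log n :=
    (Filter.eventually_ge_atTop 3).and (hlog.eventually_ge_atTop _)
  obtain ⟨N, hN⟩ := Filter.eventually_atTop.1 hev
  refine ⟨N, fun n hn => ?_⟩
  obtain ⟨hn3, hL⟩ := hN n hn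
  have : Fact (3 ≤ n) := ⟨hn3⟩
  rw [OQ.classNumber_eq hn3]
  obtain ⟨hfin, hU⟩ := hup n
  have hLo := hlow n
  have hn0 : (0 : ℝ) < n := by exact_mod_cast (by omega : 0 < n)
  have hlp : 0 < Real.log n := Real.log_pos (by exact_mod_cast (by omega : 1 < n))
  have hh : (0 : ℝ) < Nat.card (ClassGroup (OQ.OO n)) :=
    lt_of_lt_of_le (by positivity) hLo
  have h1 := Real.log_le_log (by positivity) hLo
  have h2 := Real.log_le_log hh hU
  rw [Real.log_mul hc.ne' (by positivity), Real.log_rpow hn0] at h1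
  rw [Real.log_mul (by positivity) (by positivity), Real.log_rpow hn0] at h2
  rw [div_le_iff₀ (by positivity)] at hL
  rw [Real.dist_eq, sub_zero, abs_div, abs_of_pos hlp, div_lt_iff₀ hlp, abs_lt]
  have h3 := neg_abs_le (Real.log c)
  have h4 := le_abs_self (Real.log C)
  have h5 := abs_nonneg (Real.log c)
  have h6 := abs_nonneg (Real.log C)
  have h7 : 0 < δ * Real.log n := by positivity
  rw [← hδε]
  constructor <;> nlinarith
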